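/- arXiv:1304.6059 — 3 statements merged into one kernel-verified Lean document; each statement's English description precedes it below -/
import Mathlib

section
/- Assume that S contains the identity morphisms of all objects of A and is closed under the direct sum operation (if s, s' ∈ S then s ⊕ s' ∈ S). Then the canonical comparison functor Q : A[S⁻¹] → A[S⁻¹]_add from the Gabriel–Zisman localization of A at S to A[S⁻¹]_add is an isomorphism of categories. -/
open CategoryTheory Limits Pretriangulated ZeroObject

universe v u v' u'

section TriangulatedPrelude

variable {C : Type u} [Category.{v} C] [HasZeroObject C] [HasShift C ℤ] [Preadditive C]
  [∀ n : ℤ, (shiftFunctor C n).Additive] [Pretriangulated C]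

/-- The objects of the smallest strict full triangulated subcategory of `C`
containing the set of objects `B`. -/
inductive genSub (B : Set C) : C → Prop
  | of (X : C) (hX : X ∈ B) : genSub B X
  | zero (X : C) (hX : IsZero X) : genSub B X
  | shift (X : C) (n : ℤ) (hX : genSub B X) : genSub B (X⟦n⟧)
  | ext₂ (T : Triangle C) (hT : T ∈ distTriang C) (h₁ : genSub B T.obj₁)
      (h₃ : genSub B T.obj₃) : genSub B T.obj₂

/-- The triangulated subcategory of `C` generated by `B`. -/
def genSubcat (B : Set C) : ObjectProperty C :=
  genSub B

instance (B : Set C) : (genSubcat B).IsTriangulated where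
  exists_zero := ⟨0, isZero_zero _, genSub.zero _ (isZero_zero _)⟩
  isStableUnderShiftBy n := ⟨fun X h => genSub.shift X n h⟩
  ext₂' T hT h₁ h₃ := ObjectProperty.le_isoClosure _ _ (genSub.ext₂ T hT h₁ h₃)

/-- The extension-closure of a class of objects `E`: the smallest class containing `E`
and `0` and such that for any distinguished triangle `X ⟶ Y ⟶ Z` with `X, Z` in the
class, `Y` is also in the class. -/
inductive extClosure (E : Set C) : C → Prop
  | of (X : C) (hX : X ∈ E) : extClosure E X
  | zero (X : C) (hX : IsZero X) : extClosure E X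
  | ext₂ (T : Triangle C) (hT : T ∈ distTriang C) (h₁ : extClosure E T.obj₁)
      (h₃ : extClosure E T.obj₃) : extClosure E T.obj₂

/-- `D_{[i,j]}`: the extension-closure of `∪_{i ≤ l ≤ j} D[l]`. -/
def shiftClosure (D : Set C) (i j : ℤ) : Set C :=
  extClosure {X | ∃ (Y : C) (l : ℤ), i ≤ l ∧ l ≤ j ∧ Y ∈ D ∧ X = Y⟦l⟧}

/-- `D_{≥ i} = ∪_{k ≥ i} D_{[i,k]}`. -/
def shiftClosureGE (D : Set C) (i : ℤ) : Set C := {X | ∃ k, i ≤ k ∧ X ∈ shiftClosure D i k}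

/-- `D_{≤ j} = ∪_{k ≤ j} D_{[k,j]}`. -/
def shiftClosureLE (D : Set C) (j : ℤ) : Set C := {X | ∃ k, k ≤ j ∧ X ∈ shiftClosure D k j}

/-- A set of objects `D` is weakly negative if `0 ∈ D` and `Hom(X, Y[i]) = 0`
for all `X, Y ∈ D` and all `i ≥ 2`. -/
def WeaklyNegative (D : Set C) : Prop :=
  (0 : C) ∈ D ∧ ∀ X ∈ D, ∀ Y ∈ D, ∀ i : ℤ, 2 ≤ i → ∀ f : X ⟶ (Y⟦i⟧), f = 0

end TriangulatedPrelude

attribute [local instance] Limits.hasBinaryBiproducts_of_finite_biproducts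

section KPrelude

variable {A : Type u} [Category.{v} A] [Preadditive A] [HasZeroObject A] [HasFiniteBiproducts A]

/-- The two-term cochain complex with `P` in degree `n` and `Q` in degree `n + 1`,
with differential given by `f : P ⟶ Q` (and all other terms `0`).
In particular, `twoComplex (-1) f` is the cone of a morphism `f` of `A`. -/
noncomputable def twoComplex (n : ℤ) {P Q : A} (f : P ⟶ Q) : CochainComplex A ℤ where
  X i := if i = n then P else if i = n + 1 then Q else 0
  d i j :=
    if hij : i = n ∧ j = n + 1 then
      eqToHom (by simp [hij.1]) ≫ f ≫
        eqToHom (by simp [hij.2, show ¬ ((n : ℤ) + 1 = n) by omega])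
    else 0
  shape i j hij := by
    rw [dif_neg]
    rintro ⟨rfl, rfl⟩
    exact hij rfl
  d_comp_d' i j k _ _ := by
    by_cases h1 : i = n ∧ j = n + 1
    · by_cases h2 : j = n ∧ k = n + 1
      · obtain ⟨h1a, h1b⟩ := h1; obtain ⟨h2a, h2b⟩ := h2; omega
      · rw [dif_neg h2, comp_zero]
    · rw [dif_neg h1, zero_comp]

/-- The chain map from the two-term complex (in degrees `n`, `n + 1`) determined by
`f : P ⟶ Q` to the complex concentrated in degree `n` with value `M`, whose degree `n`
component is `g : P ⟶ M`. -/
noncomputable def twoComplexToSingle (n : ℤ) {P Q M : A} (f : P ⟶ Q) (g : P ⟶ M) :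
    twoComplex n f ⟶ (HomologicalComplex.single A (ComplexShape.up ℤ) n).obj M where
  f i :=
    if h : i = n then
      eqToHom (by simp [twoComplex, h]) ≫ g ≫
        (HomologicalComplex.singleObjXSelf (ComplexShape.up ℤ) n M).inv ≫ eqToHom (by rw [h])
    else 0
  comm' i j hij := by
    simp only [ComplexShape.up_Rel] at hij
    by_cases hj : j = n
    · have hi : ¬ (i = n ∧ j = n + 1) := by rintro ⟨rfl, rfl⟩; omega
      have hd : (twoComplex n f).d i j = 0 := by
        exact dif_neg hi
      rw [hd, zero_comp]
      have : i ≠ n := by omega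
      rw [dif_neg this, zero_comp]
    · rw [dif_neg hj]
      rw [comp_zero]
      have : ((HomologicalComplex.single A (ComplexShape.up ℤ) n).obj M).d i j = 0 := by simp
      rw [this, comp_zero]

/-- The quotient functor `C^b(A) ⥤ K(A)` (restricted from all complexes). -/
noncomputable abbrev homotopyQ : CochainComplex A ℤ ⥤ HomotopyCategory A (ComplexShape.up ℤ) :=
  HomotopyCategory.quotient A (ComplexShape.up ℤ)

/-- The canonical embedding of `A` into the homotopy category, as complexes concentrated
in degree `0`. -/
noncomputable abbrev iotaA : A ⥤ HomotopyCategory A (ComplexShape.up ℤ) :=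
  HomologicalComplex.single A (ComplexShape.up ℤ) 0 ⋙ homotopyQ

/-- `B`: the set of cones of elements of `S`, viewed in the homotopy category. -/
def coneSet (S : MorphismProperty A) : Set (HomotopyCategory A (ComplexShape.up ℤ)) :=
  {X | ∃ (P Q : A) (s : P ⟶ Q), S s ∧ X = homotopyQ.obj (twoComplex (-1) s)}

/-- The Verdier localization functor of the homotopy category by the triangulated
subcategory `𝔻` generated by the cones of elements of `S`. -/
noncomputable abbrev locQ (S : MorphismProperty A) :
    HomotopyCategory A (ComplexShape.up ℤ) ⥤ (genSubcat (coneSet S)).trW.Localization :=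
  (genSubcat (coneSet S)).trW.Q

/-- The composite functor `A ⥤ K(A) ⥤ K(A)/𝔻`. -/
noncomputable abbrev uBig (S : MorphismProperty A) :
    A ⥤ (genSubcat (coneSet S)).trW.Localization :=
  iotaA ⋙ locQ S

/-- `A[S⁻¹]_add`: the full subcategory of the Verdier quotient whose
objects are those of `A` (viewed as complexes concentrated in degree `0`). -/
def AddLoc (S : MorphismProperty A) : Type u := A

noncomputable instance (S : MorphismProperty A) : Category (AddLoc S) where
  Hom X Y := (uBig S).obj X ⟶ (uBig S).obj Y
  id X := 𝟙 ((uBig S).obj X)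
  comp f g := f ≫ g

/-- The canonical functor `u : A ⥤ A[S⁻¹]_add` induced by the localization functor. -/
noncomputable def uFun (S : MorphismProperty A) : A ⥤ AddLoc S where
  obj X := X
  map f := (uBig S).map f
  map_id X := (uBig S).map_id X
  map_comp f g := (uBig S).map_comp f g

noncomputable instance (S : MorphismProperty A) : Preadditive (AddLoc S) where
  homGroup X Y := inferInstanceAs (AddCommGroup ((uBig S).obj X ⟶ (uBig S).obj Y))
  add_comp P Q R f f' g :=
    @Preadditive.add_comp _ _ _ ((uBig S).obj P) ((uBig S).obj Q) ((uBig S).obj R) f f' g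
  comp_add P Q R f g g' :=
    @Preadditive.comp_add _ _ _ ((uBig S).obj P) ((uBig S).obj Q) ((uBig S).obj R) f g g'

end KPrelude

/-! There are no morphisms of nonzero degree in `K(A)` between objects of `A`, and the cones of
the elements of `S` are extensions of objects of `A[1]` by objects of `A`. Therefore the
denominator of a fraction in the Verdier quotient between two objects of `A` can be truncated,
first from above and then from below, until its cone is an iterated extension of objects of `B`.
Such a cone is the cone of a morphism `p` of `A`, and the fraction takes the form
`a + b ≫ p⁻¹ ≫ g`.

As `S` is closed under direct sums, `A ⥤ A[S⁻¹]` preserves binary products, so that `A[S⁻¹]` is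
additive: `f + g` is the pair `(f, g)` followed by the image of `biprod.fst + biprod.snd`. The
induced functor `K(A) ⥤ K(A[S⁻¹])` kills the cones of `S`, hence factors through the Verdier
quotient. This makes the comparison functor faithful. It also shows that `p` is already inverted
in `A[S⁻¹]`, so `a + b ≫ p⁻¹ ≫ g` makes sense there, whence fullness. -/

section PartialTilting

variable {C : Type u} [Category.{v} C] [HasShift C ℤ] [Preadditive C]

/-- A set `𝒜` of objects is partial tilting if there are no nonzero morphisms of nonzero degree
between its objects. -/
def IsPartialTilting (𝒜 : Set C) : Prop :=
  ∀ X ∈ 𝒜, ∀ Y ∈ 𝒜, ∀ n : ℤ, n ≠ 0 → ∀ f : X ⟶ Y⟦n⟧, f = 0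

lemma IsPartialTilting.hom_shift_eq_zero [∀ n : ℤ, (shiftFunctor C n).PreservesZeroMorphisms]
    {𝒜 : Set C} (h𝒜 : IsPartialTilting 𝒜) {X Y : C} (hX : X ∈ 𝒜)
    (hY : Y ∈ 𝒜) {i j : ℤ} (hij : i ≠ j) (f : X⟦i⟧ ⟶ Y⟦j⟧) : f = 0 := by
  let e := (shiftFunctorAdd' C (j - i) i j (by ring)).app Y
  obtain ⟨g, hg⟩ := (shiftFunctor C i).map_surjective (f ≫ e.hom)
  rw [h𝒜 X hX Y hY (j - i) (sub_ne_zero.2 hij.symm) g, Functor.map_zero] at hg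
  rw [← cancel_mono e.hom, ← hg, zero_comp]

end PartialTilting

section DistinguishedTriangles

variable {C : Type u} [Category.{v} C] [HasZeroObject C] [HasShift C ℤ] [Preadditive C]
  [∀ n : ℤ, (shiftFunctor C n).Additive] [Pretriangulated C]

lemma exists_map_of_comp_eq {X Y Y' Z Z' : C} {f : X ⟶ Y} {g : Y ⟶ Z} {h : Z ⟶ X⟦(1 : ℤ)⟧}
    (hT : Triangle.mk f g h ∈ distTriang C) {f' : X ⟶ Y'} {g' : Y' ⟶ Z'} {h' : Z' ⟶ X⟦(1 : ℤ)⟧}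
    (hT' : Triangle.mk f' g' h' ∈ distTriang C) (c : Z ⟶ Z') (hc : c ≫ h' = h) :
    ∃ b : Y ⟶ Y', f ≫ b = f' ∧ g ≫ c = b ≫ g' := by
  have hc' : h ≫ (𝟙 X)⟦(1 : ℤ)⟧' = c ≫ h' := by
    rw [hc, CategoryTheory.Functor.map_id, Category.comp_id]
  obtain ⟨b, hb, hb'⟩ := complete_distinguished_triangle_morphism₂ _ _ hT hT' (𝟙 X) c hc'
  exact ⟨b, hb.trans (Category.id_comp f'), hb'⟩

lemma exists_lift_of_comp_eq_zero {X Y Y' Z Z₁ Z₂ : C} {s : Y ⟶ Y'} {π : Y' ⟶ Z}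
    {δ : Z ⟶ Y⟦(1 : ℤ)⟧} (hs : Triangle.mk s π δ ∈ distTriang C) {i : Z₁ ⟶ Z} {j : Z ⟶ Z₂}
    {k : Z₂ ⟶ Z₁⟦(1 : ℤ)⟧} (hZ : Triangle.mk i j k ∈ distTriang C) (f : X ⟶ Y')
    (hf : (f ≫ π) ≫ j = 0) :
    ∃ (Y₁ : C) (s₁ : Y ⟶ Y₁) (π₁ : Y₁ ⟶ Z₁) (t : Y₁ ⟶ Y') (f₁ : X ⟶ Y₁),
      Triangle.mk s₁ π₁ (i ≫ δ) ∈ distTriang C ∧ s₁ ≫ t = s ∧ f₁ ≫ t = f := by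
  obtain ⟨Y₁, s₁, π₁, hs₁⟩ := distinguished_cocone_triangle₂ (i ≫ δ)
  obtain ⟨t, ht₁, ht₂⟩ := exists_map_of_comp_eq hs₁ hs i rfl
  obtain ⟨(c : X ⟶ Z₁), (hc : f ≫ π = c ≫ i)⟩ := Triangle.coyoneda_exact₂ _ hZ (f ≫ π) hf
  have hπδ : π ≫ δ = 0 := comp_distTriang_mor_zero₂₃ _ hs
  have hcδ : c ≫ i ≫ δ = 0 := by rw [← Category.assoc, ← hc, Category.assoc, hπδ, comp_zero]
  obtain ⟨(f₀ : X ⟶ Y₁), (hf₀ : c = f₀ ≫ π₁)⟩ := Triangle.coyoneda_exact₃ _ hs₁ c hcδ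
  have hf₀π : (f - f₀ ≫ t) ≫ π = 0 := by
    rw [Preadditive.sub_comp, Category.assoc, ← ht₂, hc, hf₀, Category.assoc, sub_self]
  obtain ⟨(a : X ⟶ Y), (ha : f - f₀ ≫ t = a ≫ s)⟩ := Triangle.coyoneda_exact₂ _ hs _ hf₀π
  refine ⟨Y₁, s₁, π₁, t, a ≫ s₁ + f₀, hs₁, ht₁, ?_⟩
  rw [Preadditive.add_comp, Category.assoc, ht₁, ← ha, sub_add_cancel]

lemma exists_descent_of_comp_eq_zero {Y Y₁ Z Z₁ Z₂ : C} {s : Y ⟶ Y₁} {π : Y₁ ⟶ Z}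
    {δ : Z ⟶ Y⟦(1 : ℤ)⟧} (hs : Triangle.mk s π δ ∈ distTriang C) {i : Z₁ ⟶ Z} {j : Z ⟶ Z₂}
    {k : Z₂ ⟶ Z₁⟦(1 : ℤ)⟧} (hZ : Triangle.mk i j k ∈ distTriang C) (hδ : i ≫ δ = 0) :
    ∃ (Y₂ : C) (s₂ : Y ⟶ Y₂) (π₂ : Y₂ ⟶ Z₂) (δ₂ : Z₂ ⟶ Y⟦(1 : ℤ)⟧) (r : Y₁ ⟶ Y₂),
      Triangle.mk s₂ π₂ δ₂ ∈ distTriang C ∧ s ≫ r = s₂ := by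
  obtain ⟨(δ₂ : Z₂ ⟶ Y⟦(1 : ℤ)⟧), (hδ₂ : δ = j ≫ δ₂)⟩ := Triangle.yoneda_exact₂ _ hZ δ hδ
  obtain ⟨Y₂, s₂, π₂, hs₂⟩ := distinguished_cocone_triangle₂ δ₂
  obtain ⟨r, hr, -⟩ := exists_map_of_comp_eq hs hs₂ j hδ₂.symm
  exact ⟨Y₂, s₂, π₂, δ₂, r, hs₂, hr⟩

lemma exists_eq_comp_add_comp {X Y Y' P Q Z : C} {s : Y ⟶ Y'} {π : Y' ⟶ Z}
    {δ : Z ⟶ Y⟦(1 : ℤ)⟧} (hs : Triangle.mk s π δ ∈ distTriang C) {p : P ⟶ Q} {i : Q ⟶ Z}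
    {j : Z ⟶ P⟦(1 : ℤ)⟧} (hp : Triangle.mk p i j ∈ distTriang C) (f : X ⟶ Y')
    (hQY : ∀ u : Q ⟶ Y⟦(1 : ℤ)⟧, u = 0) (hXP : ∀ u : X ⟶ P⟦(1 : ℤ)⟧, u = 0) :
    ∃ (a : X ⟶ Y) (b : X ⟶ Q) (g : P ⟶ Y) (k : Q ⟶ Y'),
      f = a ≫ s + b ≫ k ∧ p ≫ k = g ≫ s := by
  obtain ⟨g', (hg' : δ = j ≫ g')⟩ := Triangle.yoneda_exact₃ _ hp δ (hQY _)
  obtain ⟨(g : P ⟶ Y), rfl⟩ := (shiftFunctor C (1 : ℤ)).map_surjective g'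
  obtain ⟨(k : Q ⟶ Y'), (hpk : p ≫ k = g ≫ s), (hik : i ≫ 𝟙 Z = k ≫ π)⟩ :=
    complete_distinguished_triangle_morphism₂ _ _ hp hs g (𝟙 Z)
      (hg'.symm.trans (Category.id_comp δ).symm)
  obtain ⟨(b : X ⟶ Q), (hb : f ≫ π = b ≫ i)⟩ := Triangle.coyoneda_exact₃ _ hp (f ≫ π) (hXP _)
  have hbπ : (f - b ≫ k) ≫ π = 0 := by
    rw [Preadditive.sub_comp, Category.assoc, ← hik, Category.comp_id, hb, sub_self]
  obtain ⟨(a : X ⟶ Y), (ha : f - b ≫ k = a ≫ s)⟩ := Triangle.coyoneda_exact₂ _ hs _ hbπ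
  exact ⟨a, b, g, k, sub_eq_iff_eq_add.1 ha, hpk⟩

end DistinguishedTriangles

section ExtensionClosures

variable {C : Type u} [Category.{v} C] [HasZeroObject C] [HasShift C ℤ] [Preadditive C]
  [∀ n : ℤ, (shiftFunctor C n).Additive] [Pretriangulated C]

lemma isClosedUnderIsomorphisms_of_ext₂ {P : ObjectProperty C} (h₀ : P 0)
    (h : ∀ T ∈ distTriang C, P T.obj₁ → P T.obj₃ → P T.obj₂) : P.IsClosedUnderIsomorphisms where
  of_iso e hX := h (Triangle.mk e.hom (0 : _ ⟶ (0 : C)) 0)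
    ((Triangle.distinguished_iff_of_isZero₃ _ (isZero_zero C)).2 (inferInstanceAs (IsIso e.hom)))
    hX h₀

instance (P : ObjectProperty C) [P.ContainsZero] [P.IsClosedUnderIsomorphisms] (n : ℤ) :
    (P.shift n).ContainsZero where
  exists_zero := ⟨0, isZero_zero C,
    P.prop_of_isZero ((shiftFunctor C n).map_isZero (isZero_zero C))⟩

instance (P : ObjectProperty C) [P.IsTriangulatedClosed₂] [P.IsClosedUnderIsomorphisms] (n : ℤ) :
    (P.shift n).IsTriangulatedClosed₂ :=
  .mk' fun T hT h₁ h₃ => P.ext_of_isTriangulatedClosed₂ _ (T.shift_distinguished hT n) h₁ h₃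

/-- The extension closure `B_I` of the shifts `Y⟦i⟧` with `Y ∈ B` and `i ∈ I`. Allowing an
arbitrary set `I` of degrees puts `shiftClosure`, `shiftClosureGE` and `shiftClosureLE` on the
same footing. -/
def shiftExtClosure (B : Set C) (I : Set ℤ) : ObjectProperty C :=
  extClosure {X | ∃ Y ∈ B, ∃ i ∈ I, X = Y⟦i⟧}

variable {B B' : Set C} {I J K : Set ℤ}

instance : (shiftExtClosure B I).ContainsZero where
  exists_zero := ⟨0, isZero_zero C, .zero _ (isZero_zero C)⟩

instance : (shiftExtClosure B I).IsClosedUnderIsomorphisms :=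
  isClosedUnderIsomorphisms_of_ext₂ (.zero _ (isZero_zero C)) extClosure.ext₂

instance : (shiftExtClosure B I).IsTriangulatedClosed₂ :=
  .mk' extClosure.ext₂

lemma shiftExtClosure_of_mem {Y : C} (hY : Y ∈ B) {i : ℤ} (hi : i ∈ I) :
    shiftExtClosure B I (Y⟦i⟧) :=
  .of _ ⟨Y, hY, i, hi, rfl⟩

lemma shiftExtClosure_of_zero_mem {Y : C} (hY : Y ∈ B) (h : (0 : ℤ) ∈ I) :
    shiftExtClosure B I Y :=
  (shiftExtClosure B I).prop_of_iso ((shiftFunctorZero C ℤ).app Y) (shiftExtClosure_of_mem hY h)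

lemma shiftExtClosure_le {P : ObjectProperty C} [P.ContainsZero] [P.IsClosedUnderIsomorphisms]
    [P.IsTriangulatedClosed₂] (h : ∀ Y ∈ B, ∀ i ∈ I, P (Y⟦i⟧)) : shiftExtClosure B I ≤ P := by
  intro X hX
  induction hX with
  | of X hX => obtain ⟨Y, hY, i, hi, rfl⟩ := hX; exact h Y hY i hi
  | zero X hX => exact P.prop_of_isZero hX
  | ext₂ T hT _ _ h₁ h₃ => exact P.ext_of_isTriangulatedClosed₂ T hT h₁ h₃

lemma shiftExtClosure_le_shift (n : ℤ) (h : ∀ i ∈ I, i + n ∈ J) :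
    shiftExtClosure B I ≤ (shiftExtClosure B J).shift n :=
  shiftExtClosure_le fun Y hY i hi => (shiftExtClosure B J).prop_of_iso
    ((shiftFunctorAdd C i n).app Y) (shiftExtClosure_of_mem hY (h i hi))

lemma shiftExtClosure_le_shiftExtClosure
    (h : ∀ Y ∈ B, shiftExtClosure B' K Y) (hJ : ∀ i ∈ I, ∀ k ∈ K, k + i ∈ J) :
    shiftExtClosure B I ≤ shiftExtClosure B' J :=
  shiftExtClosure_le fun Y hY i hi =>
    shiftExtClosure_le_shift (J := J) i (fun k hk => hJ i hi k hk) Y (h Y hY)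

instance : (genSubcat B).IsClosedUnderIsomorphisms :=
  isClosedUnderIsomorphisms_of_ext₂ (.zero _ (isZero_zero C)) genSub.ext₂

lemma shiftExtClosure_le_genSubcat : shiftExtClosure B I ≤ genSubcat B :=
  shiftExtClosure_le fun Y hY i _ => .shift Y i (.of Y hY)

lemma genSubcat_le_shiftExtClosure_univ : genSubcat B ≤ shiftExtClosure B Set.univ := by
  intro X hX
  induction hX with
  | of X hX => exact shiftExtClosure_of_zero_mem hX trivial
  | zero X hX => exact .zero X hX
  | shift X n _ h => exact shiftExtClosure_le_shift (J := Set.univ) n (fun _ _ => trivial) X h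
  | ext₂ T hT _ _ h₁ h₃ => exact .ext₂ T hT h₁ h₃

lemma shiftExtClosure_le_leftOrthogonal_of_hom_eq_zero
    (h : ∀ X ∈ B, ∀ i ∈ I, ∀ Y ∈ B', ∀ j ∈ J, ∀ f : X⟦i⟧ ⟶ Y⟦j⟧, f = 0) :
    shiftExtClosure B I ≤ (shiftExtClosure B' J).leftOrthogonal :=
  shiftExtClosure_le fun X hX i hi Y f hY =>
    shiftExtClosure_le (P := (ObjectProperty.singleton (X⟦i⟧)).rightOrthogonal)
      (fun Y' hY' j hj _ g hg => by
        rw [ObjectProperty.singleton_iff] at hg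
        subst hg
        exact h X hX i hi Y' hY' j hj g) Y hY f (by simp)

lemma extensionProduct_le_swap {P Q : ObjectProperty C}
    (h : ∀ ⦃X Y : C⦄, P X → Q Y → ∀ f : X ⟶ Y⟦(1 : ℤ)⟧, f = 0) :
    Q.extensionProduct P ≤ P.extensionProduct Q := by
  rintro X ⟨Y, Z, f, g, k, hT, hY, hZ⟩
  obtain ⟨e, -⟩ := exists_iso_binaryBiproduct_of_distTriang _ hT (h hZ hY k)
  exact (P.extensionProduct Q).prop_of_iso (biprod.braiding _ _ ≪≫ e.symm)
    ⟨_, _, _, _, _, binaryBiproductTriangle_distinguished Z Y, hZ, hY⟩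

lemma isTriangulatedClosed₂_extensionProduct [IsTriangulated C] {P Q : ObjectProperty C}
    [P.IsTriangulatedClosed₂] [P.IsClosedUnderIsomorphisms]
    [Q.IsTriangulatedClosed₂] [Q.IsClosedUnderIsomorphisms]
    (h : ∀ ⦃X Y : C⦄, P X → Q Y → ∀ f : X ⟶ Y⟦(1 : ℤ)⟧, f = 0) :
    (P.extensionProduct Q).IsTriangulatedClosed₂ := by
  have hle : (P.extensionProduct Q).extensionProduct (P.extensionProduct Q) ≤
      P.extensionProduct Q := calc
    _ = P.extensionProduct ((Q.extensionProduct P).extensionProduct Q) := by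
      simp only [ObjectProperty.extensionProduct_assoc]
    _ ≤ P.extensionProduct ((P.extensionProduct Q).extensionProduct Q) :=
      ObjectProperty.monotone_extensionProduct_right _
        (ObjectProperty.monotone_extensionProduct_left _ (extensionProduct_le_swap h))
    _ = (P.extensionProduct P).extensionProduct (Q.extensionProduct Q) := by
      simp only [ObjectProperty.extensionProduct_assoc]
    _ ≤ (P.extensionProduct P).extensionProduct Q :=
      ObjectProperty.monotone_extensionProduct_right _
        (ObjectProperty.extensionProduct_le_of_isTriangulatedClosed₂ le_rfl le_rfl)
    _ ≤ P.extensionProduct Q :=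
      ObjectProperty.monotone_extensionProduct_left _
        (ObjectProperty.extensionProduct_le_of_isTriangulatedClosed₂ le_rfl le_rfl)
  exact .mk' fun T hT h₁ h₃ => hle _ ⟨_, _, _, _, _, hT, h₁, h₃⟩

lemma shiftExtClosure_le_extensionProduct_of_hom_eq_zero [IsTriangulated C]
    (h : ∀ ⦃X Y : C⦄, shiftExtClosure B I X → shiftExtClosure B J Y →
      ∀ f : X ⟶ Y⟦(1 : ℤ)⟧, f = 0) (hK : K ⊆ I ∪ J) :
    shiftExtClosure B K ≤ (shiftExtClosure B I).extensionProduct (shiftExtClosure B J) := by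
  have := isTriangulatedClosed₂_extensionProduct h
  have hI : shiftExtClosure B I ≤ (shiftExtClosure B I).extensionProduct (shiftExtClosure B J) :=
    ObjectProperty.le_extensionProduct_left _
  have hJ : shiftExtClosure B J ≤ (shiftExtClosure B I).extensionProduct (shiftExtClosure B J) :=
    ObjectProperty.le_extensionProduct_right _
  have : ((shiftExtClosure B I).extensionProduct (shiftExtClosure B J)).ContainsZero :=
    ⟨0, isZero_zero C, hI _ (.zero _ (isZero_zero C))⟩
  refine shiftExtClosure_le fun Y hY k hk => ?_
  rcases hK hk with hk | hk
  · exact hI _ (shiftExtClosure_of_mem hY hk)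
  · exact hJ _ (shiftExtClosure_of_mem hY hk)

variable {𝒜 : Set C}

lemma IsPartialTilting.shiftExtClosure_le_leftOrthogonal (h𝒜 : IsPartialTilting 𝒜)
    (hIJ : Disjoint I J) :
    shiftExtClosure 𝒜 I ≤ (shiftExtClosure 𝒜 J).leftOrthogonal :=
  shiftExtClosure_le_leftOrthogonal_of_hom_eq_zero fun _ hX _ hi _ hY _ hj =>
    h𝒜.hom_shift_eq_zero hX hY (hIJ.ne_of_mem hi hj)

lemma IsPartialTilting.shiftExtClosure_le_extensionProduct [IsTriangulated C]
    (h𝒜 : IsPartialTilting 𝒜) (hB : ∀ Z ∈ B, shiftExtClosure 𝒜 {0, 1} Z)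
    (hIJ : ∀ i ∈ I, ∀ j ∈ J, i < j) (hK : K ⊆ I ∪ J) :
    shiftExtClosure B K ≤ (shiftExtClosure B I).extensionProduct (shiftExtClosure B J) := by
  refine shiftExtClosure_le_extensionProduct_of_hom_eq_zero (fun X Y hX hY f => ?_) hK
  have hX' : shiftExtClosure 𝒜 {n | ∃ i ∈ I, n = i ∨ n = i + 1} X :=
    shiftExtClosure_le_shiftExtClosure hB
      (by rintro i hi _ (rfl | rfl); exacts [⟨i, hi, by simp⟩, ⟨i, hi, by omega⟩]) X hX
  have hY' : shiftExtClosure 𝒜 {n | ∃ j ∈ J, n = j + 1 ∨ n = j + 2} (Y⟦(1 : ℤ)⟧) :=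
    shiftExtClosure_le_shiftExtClosure hB (I := {n | n - 1 ∈ J})
      (by rintro i hi _ (rfl | rfl); exacts [⟨_, hi, by omega⟩, ⟨_, hi, by omega⟩]) _
      (shiftExtClosure_le_shift 1 (by simp) Y hY)
  refine h𝒜.shiftExtClosure_le_leftOrthogonal (Set.disjoint_left.2 ?_) X hX' f hY'
  rintro n ⟨i, hi, hn⟩ ⟨j, hj, hn'⟩
  have := hIJ i hi j hj
  omega

end ExtensionClosures

section VerdierQuotient

variable {C : Type u} [Category.{v} C] [HasZeroObject C] [HasShift C ℤ] [Preadditive C]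
  [∀ n : ℤ, (shiftFunctor C n).Additive] [Pretriangulated C]
  {B 𝒜 : Set C}

lemma trW_genSubcat_of_shiftExtClosure {I : Set ℤ} {Y Y' Z : C} {s : Y ⟶ Y'} {π : Y' ⟶ Z}
    {δ : Z ⟶ Y⟦(1 : ℤ)⟧} (hs : Triangle.mk s π δ ∈ distTriang C) (hZ : shiftExtClosure B I Z) :
    (genSubcat B).trW s :=
  .mk _ hs (shiftExtClosure_le_genSubcat Z hZ)

variable {E : Type u'} [Category.{v'} E] (L : C ⥤ E) [L.IsLocalization (genSubcat B).trW]
  [IsTriangulated C]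

lemma exists_comp_map_eq_of_cone_nonpos (h𝒜 : IsPartialTilting 𝒜)
    (hB : ∀ Z ∈ B, shiftExtClosure 𝒜 {0, 1} Z) {X Y : C} (hX : X ∈ 𝒜)
    (φ : L.obj X ⟶ L.obj Y) :
    ∃ (Y₁ Z : C) (s : Y ⟶ Y₁) (π : Y₁ ⟶ Z) (δ : Z ⟶ Y⟦(1 : ℤ)⟧) (f : X ⟶ Y₁),
      Triangle.mk s π δ ∈ distTriang C ∧ shiftExtClosure B (Set.Iic 0) Z ∧
        φ ≫ L.map s = L.map f := by
  obtain ⟨ψ, rfl⟩ := Localization.exists_leftFraction L (genSubcat B).trW φ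
  obtain ⟨Z, π, δ, hs, hZ⟩ := ψ.hs
  obtain ⟨Z₁, Z₂, i, j, k, hT, hZ₁, hZ₂⟩ :=
    h𝒜.shiftExtClosure_le_extensionProduct hB (I := Set.Iic 0) (J := Set.Ioi 0)
      (fun i hi j hj => lt_of_le_of_lt hi hj) (by rw [Set.Iic_union_Ioi]) Z
      (genSubcat_le_shiftExtClosure_univ Z hZ)
  have hZ₂' : shiftExtClosure 𝒜 (Set.Ioi 0) Z₂ :=
    shiftExtClosure_le_shiftExtClosure hB
      (by rintro i hi _ (rfl | rfl) <;> simp only [Set.mem_Ioi] at hi ⊢ <;> omega) Z₂ hZ₂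
  have hXZ₂ : (ψ.f ≫ π) ≫ j = 0 :=
    h𝒜.shiftExtClosure_le_leftOrthogonal (I := {0}) (by simp) X
      (shiftExtClosure_of_zero_mem hX rfl) _ hZ₂'
  obtain ⟨Y₁, s₁, π₁, t, f₁, hs₁, hst, hft⟩ := exists_lift_of_comp_eq_zero hs hT ψ.f hXZ₂
  have : IsIso (L.map s₁) :=
    Localization.inverts L _ _ (trW_genSubcat_of_shiftExtClosure hs₁ hZ₁)
  have : IsIso (L.map (s₁ ≫ t)) := hst ▸ Localization.inverts L _ _ ψ.hs
  rw [L.map_comp] at this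
  have : IsIso (L.map t) := IsIso.of_isIso_comp_left (L.map s₁) (L.map t)
  refine ⟨Y₁, Z₁, s₁, π₁, i ≫ δ, f₁, hs₁, hZ₁, ?_⟩
  rw [← cancel_mono (L.map t), Category.assoc, ← L.map_comp, ← L.map_comp, hst, hft]
  exact ψ.map_comp_map_s L (Localization.inverts L _)

lemma exists_comp_map_eq_of_cone_zero (h𝒜 : IsPartialTilting 𝒜)
    (hB : ∀ Z ∈ B, shiftExtClosure 𝒜 {0, 1} Z) {X Y : C} (hX : X ∈ 𝒜) (hY : Y ∈ 𝒜)
    (φ : L.obj X ⟶ L.obj Y) :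
    ∃ (Y₁ Z : C) (s : Y ⟶ Y₁) (π : Y₁ ⟶ Z) (δ : Z ⟶ Y⟦(1 : ℤ)⟧) (f : X ⟶ Y₁),
      Triangle.mk s π δ ∈ distTriang C ∧ shiftExtClosure B {0} Z ∧
        φ ≫ L.map s = L.map f := by
  obtain ⟨Y₁, Z, s, π, δ, f, hs, hZ, hφ⟩ := exists_comp_map_eq_of_cone_nonpos L h𝒜 hB hX φ
  obtain ⟨Z₁, Z₂, i, j, k, hT, hZ₁, hZ₂⟩ :=
    h𝒜.shiftExtClosure_le_extensionProduct hB (I := Set.Iio 0) (J := {0})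
      (fun i hi j hj => lt_of_lt_of_eq hi hj.symm) (by simp) Z hZ
  have hZ₁' : shiftExtClosure 𝒜 (Set.Iic 0) Z₁ :=
    shiftExtClosure_le_shiftExtClosure hB
      (by rintro i hi _ (rfl | rfl) <;> simp only [Set.mem_Iio, Set.mem_Iic] at hi ⊢ <;> omega)
      Z₁ hZ₁
  have hZ₁Y : i ≫ δ = 0 :=
    h𝒜.shiftExtClosure_le_leftOrthogonal (J := {1}) (by simp) Z₁ hZ₁' _
      (shiftExtClosure_of_mem hY rfl)
  obtain ⟨Y₂, s₂, π₂, δ₂, r, hs₂, rfl⟩ := exists_descent_of_comp_eq_zero hs hT hZ₁Y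
  exact ⟨Y₂, Z₂, s ≫ r, π₂, δ₂, f ≫ r, hs₂, hZ₂, by rw [L.map_comp, ← Category.assoc, hφ,
    ← L.map_comp]⟩

end VerdierQuotient

section TiltingEmbedding

variable {A : Type u'} [Category.{v'} A] [Preadditive A] [HasBinaryBiproducts A]
  {C : Type u} [Category.{v} C] [HasZeroObject C] [HasShift C ℤ] [Preadditive C]
  [∀ n : ℤ, (shiftFunctor C n).Additive] [Pretriangulated C]

lemma isTriangulatedClosed₂_essImage (F : A ⥤ C) [F.Additive]
    (hF : ∀ (X Y : A) (f : F.obj X ⟶ (F.obj Y)⟦(1 : ℤ)⟧), f = 0) :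
    F.essImage.IsTriangulatedClosed₂ := by
  refine .mk' fun T hT ⟨X, ⟨e⟩⟩ ⟨Y, ⟨e'⟩⟩ => ?_
  have hT₃ : T.mor₃ = 0 := by
    rw [← cancel_epi e'.hom, ← cancel_mono (e.inv⟦(1 : ℤ)⟧'), comp_zero, zero_comp]
    exact hF Y X _
  obtain ⟨i, -⟩ := exists_iso_binaryBiproduct_of_distTriang T hT hT₃
  have := preservesBinaryBiproduct_of_preservesBiproduct F X Y
  exact ⟨X ⊞ Y, ⟨F.mapBiprod X Y ≪≫ biprod.mapIso e e' ≪≫ i.symm⟩⟩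

lemma exists_distTriang_of_shift_iso {Q' Z P' Q P : C} {i : Q' ⟶ Z} {j : Z ⟶ P'}
    {k : P' ⟶ Q'⟦(1 : ℤ)⟧} (hT : Triangle.mk i j k ∈ distTriang C) (eQ : Q ≅ Q')
    (eP : P⟦(1 : ℤ)⟧ ≅ P') :
    ∃ (p : P ⟶ Q) (i' : Q ⟶ Z) (j' : Z ⟶ P⟦(1 : ℤ)⟧), Triangle.mk p i' j' ∈ distTriang C := by
  obtain ⟨p, hp⟩ := (shiftFunctor C (1 : ℤ)).map_surjective (-(eP.hom ≫ k ≫ eQ.inv⟦(1 : ℤ)⟧'))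
  refine ⟨p, eQ.hom ≫ i, j ≫ eP.inv, ?_⟩
  rw [rotate_distinguished_triangle]
  refine isomorphic_distinguished _ hT _ (Triangle.isoMk _ _ eQ (Iso.refl _) eP ?_ ?_ ?_)
  · exact Category.comp_id _
  · change (j ≫ eP.inv) ≫ eP.hom = 𝟙 _ ≫ j
    rw [Category.assoc, Iso.inv_hom_id, Category.comp_id, Category.id_comp]
  · change (-p⟦(1 : ℤ)⟧') ≫ eQ.hom⟦(1 : ℤ)⟧' = eP.hom ≫ k
    rw [hp, neg_neg, Category.assoc, Category.assoc, ← Functor.map_comp, Iso.inv_hom_id,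
      CategoryTheory.Functor.map_id, Category.comp_id]

variable [HasZeroObject A] {ι : A ⥤ C} [ι.Additive]

lemma shiftExtClosure_range_singleton_le_essImage (hι : IsPartialTilting (Set.range ι.obj))
    (n : ℤ) : shiftExtClosure (Set.range ι.obj) {n} ≤ (ι ⋙ shiftFunctor C n).essImage := by
  have : (ι ⋙ shiftFunctor C n).essImage.IsTriangulatedClosed₂ :=
    isTriangulatedClosed₂_essImage _ fun X Y f => by
      let e := (shiftFunctorAdd C n 1).app (ι.obj Y)
      rw [← cancel_mono e.inv, zero_comp]
      exact hι.hom_shift_eq_zero ⟨X, rfl⟩ ⟨Y, rfl⟩ (by simp) _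
  have : (ι ⋙ shiftFunctor C n).essImage.ContainsZero :=
    ⟨_, (ι ⋙ shiftFunctor C n).map_isZero (isZero_zero A), Functor.obj_mem_essImage _ _⟩
  refine shiftExtClosure_le ?_
  rintro _ ⟨Y, rfl⟩ _ rfl
  exact Functor.obj_mem_essImage (ι ⋙ shiftFunctor C _) Y

variable [IsTriangulated C]

lemma exists_distTriang_of_shiftExtClosure_zero_one (hι : IsPartialTilting (Set.range ι.obj))
    {Z : C} (hZ : shiftExtClosure (Set.range ι.obj) {0, 1} Z) :
    ∃ (P Q : A) (p : ι.obj P ⟶ ι.obj Q) (i : ι.obj Q ⟶ Z) (j : Z ⟶ (ι.obj P)⟦(1 : ℤ)⟧),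
      Triangle.mk p i j ∈ distTriang C := by
  obtain ⟨Q', P', i, j, k, hT, hQ', hP'⟩ :=
    shiftExtClosure_le_extensionProduct_of_hom_eq_zero (I := {0}) (J := {1})
      (fun X Y hX hY f => hι.shiftExtClosure_le_leftOrthogonal (J := {2}) (by simp) X hX f
        (shiftExtClosure_le_shift 1 (by simp) Y hY)) (by rfl) Z hZ
  obtain ⟨Q, ⟨eQ⟩⟩ := shiftExtClosure_range_singleton_le_essImage hι 0 Q' hQ'
  obtain ⟨P, ⟨eP⟩⟩ := shiftExtClosure_range_singleton_le_essImage hι 1 P' hP'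
  exact ⟨P, Q, exists_distTriang_of_shift_iso hT
    (((shiftFunctorZero C ℤ).app (ι.obj Q)).symm ≪≫ eQ) eP⟩

theorem exists_eq_map_add_map_comp_inv_comp_map [ι.Full]
    (hι : IsPartialTilting (Set.range ι.obj)) {B : Set C}
    (hB : ∀ Z ∈ B, shiftExtClosure (Set.range ι.obj) {0, 1} Z) {E : Type*} [Category E]
    [Preadditive E] (L : C ⥤ E) [L.Additive] [L.IsLocalization (genSubcat B).trW] {X Y : A}
    (φ : L.obj (ι.obj X) ⟶ L.obj (ι.obj Y)) :
    ∃ (P Q : A) (p : P ⟶ Q) (hp : (genSubcat B).trW (ι.map p)) (a : X ⟶ Y) (b : X ⟶ Q)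
      (g : P ⟶ Y), φ = L.map (ι.map a) + L.map (ι.map b) ≫
        (Localization.isoOfHom L (genSubcat B).trW (ι.map p) hp).inv ≫ L.map (ι.map g) := by
  obtain ⟨Y₁, Z, s, π, δ, f, hs, hZ, hφ⟩ :=
    exists_comp_map_eq_of_cone_zero L hι hB ⟨X, rfl⟩ ⟨Y, rfl⟩ φ
  obtain ⟨P, Q, p', i, j, hp'⟩ := exists_distTriang_of_shiftExtClosure_zero_one hι
    (shiftExtClosure_le_shiftExtClosure hB (I := {0}) (by simp) Z hZ)
  obtain ⟨a', b', g', k, hf, hk⟩ := exists_eq_comp_add_comp hs hp' f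
    (hι _ ⟨Q, rfl⟩ _ ⟨Y, rfl⟩ 1 one_ne_zero) (hι _ ⟨X, rfl⟩ _ ⟨P, rfl⟩ 1 one_ne_zero)
  obtain ⟨p, rfl⟩ := ι.map_surjective p'
  obtain ⟨a, rfl⟩ := ι.map_surjective a'
  obtain ⟨b, rfl⟩ := ι.map_surjective b'
  obtain ⟨g, rfl⟩ := ι.map_surjective g'
  have hp : (genSubcat B).trW (ι.map p) := trW_genSubcat_of_shiftExtClosure hp' hZ
  refine ⟨P, Q, p, hp, a, b, g, ?_⟩
  have : IsIso (L.map s) := Localization.inverts L _ _ (trW_genSubcat_of_shiftExtClosure hs hZ)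
  have hLk : L.map k = (Localization.isoOfHom L (genSubcat B).trW (ι.map p) hp).inv ≫
      L.map (ι.map g) ≫ L.map s := by
    rw [Iso.eq_inv_comp, Localization.isoOfHom_hom, ← L.map_comp, ← L.map_comp, hk]
  rw [← cancel_mono (L.map s), hφ, hf, L.map_add, L.map_comp, L.map_comp, hLk]
  simp only [Preadditive.add_comp, Category.assoc]

end TiltingEmbedding

section MappingCone

open CochainComplex HomComplex

variable {A : Type u} [Category.{v} A] [Preadditive A] {K L : CochainComplex A ℤ} (φ : K ⟶ L)
  [HomologicalComplex.HasHomotopyCofiber φ]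

lemma isIso_mappingCone_inl_v {p q : ℤ} (h : p + -1 = q) (hL : IsZero (L.X q)) :
    IsIso ((mappingCone.inl φ).v p q h) := by
  refine ⟨(mappingCone.fst φ).1.v q p (by omega), mappingCone.inl_v_fst_v _ _ _ _, ?_⟩
  rw [← mappingCone.id_X φ q p (by omega), left_eq_add]
  exact (hL.eq_zero_of_tgt ((mappingCone.snd φ).v q q (add_zero q))) ▸ zero_comp

lemma isIso_mappingCone_inr_f {p q : ℤ} (h : q + 1 = p) (hK : IsZero (K.X p)) :
    IsIso ((mappingCone.inr φ).f q) := by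
  refine ⟨(mappingCone.snd φ).v q q (add_zero q), mappingCone.inr_f_snd_v _ _, ?_⟩
  rw [← mappingCone.id_X φ q p h, right_eq_add]
  exact (hK.eq_zero_of_tgt ((mappingCone.fst φ).1.v q p h)) ▸ zero_comp

end MappingCone

section TwoComplex

open CochainComplex HomComplex

variable {A : Type u} [Category.{v} A] [Preadditive A] [HasZeroObject A] {P Q : A} (f : P ⟶ Q)
  {m n : ℤ}

variable (n) in
lemma twoComplex_X_left : (twoComplex n f).X n = P := if_pos rfl

lemma twoComplex_X_right (h : n + 1 = m) : (twoComplex n f).X m = Q := by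
  subst h
  simp [twoComplex]

lemma isZero_twoComplex_X {i : ℤ} (hn : i ≠ n) (h : n + 1 = m) (hm : i ≠ m) :
    IsZero ((twoComplex n f).X i) := by
  subst h
  simpa [twoComplex, hn, hm] using isZero_zero A

lemma twoComplex_d (h : n + 1 = m) :
    (twoComplex n f).d n m =
      eqToHom (twoComplex_X_left f n) ≫ f ≫ eqToHom (twoComplex_X_right f h).symm :=
  dif_pos ⟨rfl, h.symm⟩

/-- The inclusion of the term of degree `m = n + 1` into the two-term complex. -/
noncomputable def singleToTwoComplex (h : n + 1 = m) :
    (HomologicalComplex.single A (ComplexShape.up ℤ) m).obj Q ⟶ twoComplex n f :=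
  HomologicalComplex.mkHomFromSingle (eqToHom (twoComplex_X_right f h).symm) fun k hk =>
    have hk : m + 1 = k := hk
    (isZero_twoComplex_X f (by omega) h (by omega)).eq_of_tgt _ _

/-- The inclusion of the term of degree `n` into the two-term complex, as a cochain of degree `-1`
on the complex concentrated in degree `m = n + 1`. -/
noncomputable def singleToTwoComplexCochain (n m : ℤ) :
    Cochain ((HomologicalComplex.single A (ComplexShape.up ℤ) m).obj P) (twoComplex n f) (-1) :=
  .single ((HomologicalComplex.singleObjXSelf (ComplexShape.up ℤ) m P).hom ≫
    eqToHom (twoComplex_X_left f n).symm) (-1)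

lemma δ_singleToTwoComplexCochain (h : n + 1 = m) :
    δ (-1) 0 (singleToTwoComplexCochain f n m) =
      Cochain.ofHom ((HomologicalComplex.single A (ComplexShape.up ℤ) m).map f ≫
        singleToTwoComplex f h) := by
  rw [singleToTwoComplexCochain,
    Cochain.δ_single _ (-1) 0 (by omega) (m - 1) m (by omega) (by omega)]
  ext p
  by_cases hp : p = m
  · subst hp
    simp [singleToTwoComplex, twoComplex_d f h, HomologicalComplex.single_map_f_self]
  · exact (HomologicalComplex.isZero_single_obj_X _ _ _ _ hp).eq_of_src _ _

variable [HasBinaryBiproducts A]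

/-- The comparison between the mapping cone of `f`, for `P` and `Q` placed in degree `m = n + 1`,
and the two-term complex in degrees `n` and `m`. -/
noncomputable def mappingConeSingleToTwoComplex (h : n + 1 = m) :
    mappingCone ((HomologicalComplex.single A (ComplexShape.up ℤ) m).map f) ⟶ twoComplex n f :=
  mappingCone.desc _ (singleToTwoComplexCochain f n m) (singleToTwoComplex f h)
    (δ_singleToTwoComplexCochain f h)

instance isIso_mappingConeSingleToTwoComplex (h : n + 1 = m) :
    IsIso (mappingConeSingleToTwoComplex f h) := by
  let φ := (HomologicalComplex.single A (ComplexShape.up ℤ) m).map f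
  have hX (M : A) {i : ℤ} (hi : i ≠ m) :
      IsZero (((HomologicalComplex.single A (ComplexShape.up ℤ) m).obj M).X i) :=
    HomologicalComplex.isZero_single_obj_X _ _ _ _ hi
  have (i : ℤ) : IsIso ((mappingConeSingleToTwoComplex f h).f i) := by
    by_cases hn : i = n
    · subst hn
      have : IsIso ((mappingCone.inl φ).v m i (by omega)) :=
        isIso_mappingCone_inl_v φ _ (hX Q (by omega))
      have : IsIso ((singleToTwoComplexCochain f i m).v m i (by omega)) := by
        rw [singleToTwoComplexCochain, Cochain.single_v]
        infer_instance
      exact IsIso.of_isIso_fac_left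
        (mappingCone.inl_v_desc_f φ _ _ (δ_singleToTwoComplexCochain f h) m i _)
    by_cases hm : i = m
    · subst hm
      have : IsIso ((mappingCone.inr φ).f i) :=
        isIso_mappingCone_inr_f φ rfl (hX P (by omega))
      have : IsIso ((singleToTwoComplex f h).f i) := by
        rw [singleToTwoComplex, HomologicalComplex.mkHomFromSingle_f]
        infer_instance
      exact IsIso.of_isIso_fac_left
        (mappingCone.inr_f_desc_f φ _ _ (δ_singleToTwoComplexCochain f h) i)
    · exact ((mappingCone.isZero_X_iff φ i).2 ⟨hX P (by omega), hX Q hm⟩).isIso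
        (isZero_twoComplex_X f hn h hm) _
  exact HomologicalComplex.Hom.isIso_of_components _

end TwoComplex

section Embedding

variable {A : Type u} [Category.{v} A] [Preadditive A] [HasZeroObject A]

instance : (iotaA (A := A)).Faithful where
  map_injective {X Y f g} h := by
    refine (HomologicalComplex.single A (ComplexShape.up ℤ) 0).map_injective ?_
    ext
    rw [(HomotopyCategory.homotopyOfEq _ _ h).comm 0]
    simp [dNext, prevD]

instance : (iotaA (A := A)).Additive where
  map_add {X Y f g} := by
    change homotopyQ.map _ = _
    rw [Functor.map_add, Functor.map_add]
    rfl

lemma isPartialTilting_range_iotaA : IsPartialTilting (Set.range (iotaA (A := A)).obj) := by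
  rintro _ ⟨X, rfl⟩ _ ⟨Y, rfl⟩ n hn f
  let e := (homotopyQ.commShiftIso n).app
    ((HomologicalComplex.single A (ComplexShape.up ℤ) 0).obj Y)
  obtain ⟨g : (HomologicalComplex.single A (ComplexShape.up ℤ) 0).obj X ⟶
    ((HomologicalComplex.single A (ComplexShape.up ℤ) 0).obj Y)⟦n⟧, hg⟩ :=
      homotopyQ.map_surjective (f ≫ e.inv)
  have hg₀ : g = 0 := HomologicalComplex.Hom.ext <| funext fun i => by
    by_cases hi : i = 0
    · exact IsZero.eq_of_tgt
        (HomologicalComplex.isZero_single_obj_X (.up ℤ) 0 Y (i + n) (by omega)) _ _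
    · exact (HomologicalComplex.isZero_single_obj_X _ _ _ _ hi).eq_of_src _ _
  rw [← cancel_mono e.inv, ← hg, hg₀, Functor.map_zero, zero_comp]

variable [HasFiniteBiproducts A]

lemma exists_distTriang_twoComplex {P Q : A} (f : P ⟶ Q) :
    ∃ (i : iotaA.obj Q ⟶ homotopyQ.obj (twoComplex (-1) f))
      (j : homotopyQ.obj (twoComplex (-1) f) ⟶ (iotaA.obj P)⟦(1 : ℤ)⟧),
      Triangle.mk (iotaA.map f) i j ∈ distTriang (HomotopyCategory A (ComplexShape.up ℤ)) := by
  let e : homotopyQ.obj (CochainComplex.mappingCone _) ≅ homotopyQ.obj (twoComplex (-1) f) :=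
    homotopyQ.mapIso (asIso (mappingConeSingleToTwoComplex f (neg_add_cancel (1 : ℤ))))
  let φ := (HomologicalComplex.single A (ComplexShape.up ℤ) 0).map f
  let i : iotaA.obj Q ⟶ homotopyQ.obj (CochainComplex.mappingCone φ) :=
    (CochainComplex.mappingCone.triangleh φ).mor₂
  let j : homotopyQ.obj (CochainComplex.mappingCone φ) ⟶ (iotaA.obj P)⟦(1 : ℤ)⟧ :=
    (CochainComplex.mappingCone.triangleh φ).mor₃
  have hT : Triangle.mk (iotaA.map f) i j ∈ distTriang _ :=
    HomotopyCategory.mappingCone_triangleh_distinguished φ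
  refine ⟨i ≫ e.hom, e.inv ≫ j, isomorphic_distinguished _ hT _
    (Triangle.isoMk _ _ (Iso.refl _) (Iso.refl _) e.symm ?_ ?_ ?_)⟩
  · exact (Category.comp_id _).trans (Category.id_comp _).symm
  · change (i ≫ e.hom) ≫ e.inv = 𝟙 _ ≫ i
    simp
  · change (e.inv ≫ j) ≫ (𝟙 (iotaA.obj P))⟦(1 : ℤ)⟧' = e.inv ≫ j
    rw [CategoryTheory.Functor.map_id]
    exact Category.comp_id _

lemma shiftExtClosure_range_iotaA_of_mem_coneSet (S : MorphismProperty A) :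
    ∀ Z ∈ coneSet S, shiftExtClosure (Set.range (iotaA (A := A)).obj) {0, 1} Z := by
  rintro _ ⟨P, Q, s, -, rfl⟩
  obtain ⟨i, j, hT⟩ := exists_distTriang_twoComplex s
  exact .ext₂ _ (rot_of_distTriang _ hT)
    (shiftExtClosure_of_zero_mem (Set.mem_range_self Q) (by simp))
    (shiftExtClosure_of_mem (Set.mem_range_self P) (by simp))

lemma trW_genSubcat_coneSet {S : MorphismProperty A} {P Q : A} {s : P ⟶ Q} (hs : S s) :
    (genSubcat (coneSet S)).trW (iotaA.map s) := by
  obtain ⟨i, j, hT⟩ := exists_distTriang_twoComplex s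
  exact .mk _ hT (.of _ ⟨P, Q, s, hs, rfl⟩)

lemma isInvertedBy_uBig (S : MorphismProperty A) : S.IsInvertedBy (uBig S) := fun _ _ _ hs =>
  Localization.inverts (locQ S) _ _ (trW_genSubcat_coneSet hs)

end Embedding

section Addition

variable {A D : Type*} [Category A] [Category D] [Preadditive A] [HasBinaryBiproducts A] (L : A ⥤ D)
  [PreservesLimitsOfShape (Discrete WalkingPair) L] {W W' : D} {X Y : A}

lemma existsUnique_comp_map_fst_snd (f : W ⟶ L.obj X) (g : W ⟶ L.obj Y) :
    ∃! k : W ⟶ L.obj (X ⊞ Y), k ≫ L.map biprod.fst = f ∧ k ≫ L.map biprod.snd = g := by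
  let h := mapIsLimitOfPreservesOfIsLimit L _ _ (BinaryBiproduct.isLimit X Y)
  obtain ⟨k, hk₁, hk₂⟩ := BinaryFan.IsLimit.lift' h f g
  exact ⟨k, ⟨hk₁, hk₂⟩, fun l hl => BinaryFan.IsLimit.hom_ext h
    (hl.1.trans hk₁.symm) (hl.2.trans hk₂.symm)⟩

/-- The sum of two morphisms into `L.obj Y`, for a functor `L` which preserves binary products: the
addition `Y ⊞ Y ⟶ Y` is applied after the morphism into `L.obj (Y ⊞ Y)` with the given
components. -/
noncomputable def addAlong (f g : W ⟶ L.obj Y) : W ⟶ L.obj Y :=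
  (existsUnique_comp_map_fst_snd L f g).choose ≫ L.map (biprod.fst + biprod.snd)

variable {L}

lemma addAlong_eq {f g : W ⟶ L.obj Y} {k : W ⟶ L.obj (Y ⊞ Y)} (hf : k ≫ L.map biprod.fst = f)
    (hg : k ≫ L.map biprod.snd = g) :
    addAlong L f g = k ≫ L.map (biprod.fst + biprod.snd) := by
  rw [(existsUnique_comp_map_fst_snd L f g).unique ⟨hf, hg⟩
    (existsUnique_comp_map_fst_snd L f g).choose_spec.1, addAlong]

lemma comp_addAlong (h : W ⟶ W') (f g : W' ⟶ L.obj Y) :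
    h ≫ addAlong L f g = addAlong L (h ≫ f) (h ≫ g) := by
  obtain ⟨k, ⟨rfl, rfl⟩, -⟩ := existsUnique_comp_map_fst_snd L f g
  rw [addAlong_eq rfl rfl, addAlong_eq (k := h ≫ k) (by simp) (by simp), Category.assoc]

lemma addAlong_comp_map (k : W ⟶ L.obj X) (a b : X ⟶ Y) :
    addAlong L (k ≫ L.map a) (k ≫ L.map b) = k ≫ L.map (a + b) := by
  rw [addAlong_eq (k := k ≫ L.map (biprod.lift a b)) (by simp [← Functor.map_comp])
    (by simp [← Functor.map_comp]), Category.assoc, ← Functor.map_comp]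
  simp

lemma addAlong_map (a b : X ⟶ Y) : addAlong L (L.map a) (L.map b) = L.map (a + b) := by
  simpa using addAlong_comp_map (𝟙 (L.obj X)) a b

lemma addAlong_comm (f g : W ⟶ L.obj Y) : addAlong L f g = addAlong L g f := by
  obtain ⟨k, ⟨rfl, rfl⟩, -⟩ := existsUnique_comp_map_fst_snd L f g
  rw [addAlong_comp_map, addAlong_comp_map, add_comm]

lemma addAlong_assoc (f g h : W ⟶ L.obj Y) :
    addAlong L (addAlong L f g) h = addAlong L f (addAlong L g h) := by
  obtain ⟨k, ⟨rfl, rfl⟩, -⟩ := existsUnique_comp_map_fst_snd L f g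
  obtain ⟨l, ⟨rfl, rfl⟩, -⟩ := existsUnique_comp_map_fst_snd L k h
  simp only [Category.assoc, ← Functor.map_comp, addAlong_comp_map, add_assoc]

lemma comp_map_zero_addAlong (f : W ⟶ L.obj X) (g : W ⟶ L.obj Y) :
    addAlong L (f ≫ L.map 0) g = g := by
  obtain ⟨k, ⟨rfl, rfl⟩, -⟩ := existsUnique_comp_map_fst_snd L f g
  rw [Category.assoc, ← Functor.map_comp, addAlong_comp_map, comp_zero, zero_add]

lemma comp_map_neg_addAlong (f : W ⟶ L.obj Y) :
    addAlong L (f ≫ L.map (-𝟙 Y)) f = f ≫ L.map 0 := by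
  simpa using addAlong_comp_map f (-𝟙 Y) (𝟙 Y)

lemma map_zero_addAlong (f : L.obj X ⟶ L.obj Y) : addAlong L (L.map 0) f = f := by
  simpa using comp_map_zero_addAlong (𝟙 (L.obj X)) f

lemma comp_map_zero {Z : A} (f : L.obj X ⟶ L.obj Y) : f ≫ L.map (0 : Y ⟶ Z) = L.map 0 := by
  rw [← map_zero_addAlong (f ≫ L.map 0), addAlong_comm, comp_map_zero_addAlong]

lemma addAlong_comp_map_right (f g : W ⟶ L.obj X) (a : X ⟶ Y) :
    addAlong L f g ≫ L.map a = addAlong L (f ≫ L.map a) (g ≫ L.map a) := by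
  obtain ⟨k, ⟨rfl, rfl⟩, -⟩ := existsUnique_comp_map_fst_snd L f g
  simp only [Category.assoc, ← Functor.map_comp, addAlong_comp_map, Preadditive.add_comp]

end Addition

section PreservesProducts

lemma isLocalization_isoClosure {A D : Type*} [Category A] [Category D] (L : A ⥤ D)
    (S : MorphismProperty A) [L.IsLocalization S] : L.IsLocalization S.isoClosure := by
  have hS : S.isoClosure ≤ (MorphismProperty.isomorphisms _).inverseImage L :=
    (MorphismProperty.isoClosure_le_iff _ _).2 (Localization.inverts L S)
  exact .of_equivalence_source L S L S.isoClosure CategoryTheory.Equivalence.refl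
    (by simpa using S.le_isoClosure) hS (Iso.refl _)

variable {A : Type*} [Category A] [Preadditive A] [HasBinaryBiproducts A] {S : MorphismProperty A}

lemma isStableUnderProductsOfShape_walkingPair_isoClosure
    (hsum : ∀ ⦃X Y X' Y' : A⦄ (s : X ⟶ Y) (s' : X' ⟶ Y'), S s → S s' → S (biprod.map s s')) :
    S.isoClosure.IsStableUnderProductsOfShape WalkingPair where
  condition F₁ F₂ c₁ c₂ hc₁ hc₂ f hf φ hφ := by
    obtain ⟨P, Q, s, hs, ⟨e⟩⟩ := hf ⟨.left⟩
    obtain ⟨P', Q', s', hs', ⟨e'⟩⟩ := hf ⟨.right⟩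
    let α : pair P P' ≅ F₁ := mapPairIso (Arrow.leftFunc.mapIso e) (Arrow.leftFunc.mapIso e')
    let β : pair Q Q' ≅ F₂ := mapPairIso (Arrow.rightFunc.mapIso e) (Arrow.rightFunc.mapIso e')
    let i : P ⊞ P' ≅ c₁.pt := (BinaryBiproduct.isLimit P P').conePointsIsoOfNatIso hc₁ α
    let j : Q ⊞ Q' ≅ c₂.pt := (BinaryBiproduct.isLimit Q Q').conePointsIsoOfNatIso hc₂ β
    have hi₁ : i.hom ≫ c₁.π.app ⟨.left⟩ = biprod.fst ≫ e.hom.left :=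
      IsLimit.conePointsIsoOfNatIso_hom_comp _ hc₁ α _
    have hi₂ : i.hom ≫ c₁.π.app ⟨.right⟩ = biprod.snd ≫ e'.hom.left :=
      IsLimit.conePointsIsoOfNatIso_hom_comp _ hc₁ α _
    have hj₁ : j.hom ≫ c₂.π.app ⟨.left⟩ = biprod.fst ≫ e.hom.right :=
      IsLimit.conePointsIsoOfNatIso_hom_comp _ hc₂ β _
    have hj₂ : j.hom ≫ c₂.π.app ⟨.right⟩ = biprod.snd ≫ e'.hom.right :=
      IsLimit.conePointsIsoOfNatIso_hom_comp _ hc₂ β _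
    have he : e.hom.left ≫ f.app ⟨.left⟩ = s ≫ e.hom.right := Arrow.w e.hom
    have he' : e'.hom.left ≫ f.app ⟨.right⟩ = s' ≫ e'.hom.right := Arrow.w e'.hom
    suffices i.hom ≫ φ = biprod.map s s' ≫ j.hom from
      ⟨_, _, _, hsum s s' hs hs', ⟨Arrow.isoMk i j this⟩⟩
    refine hc₂.hom_ext ?_
    rintro ⟨_ | _⟩
    · rw [Category.assoc, Category.assoc, hφ, reassoc_of% hi₁, he, hj₁]
      exact (biprod.map_fst_assoc s s' _).symm
    · rw [Category.assoc, Category.assoc, hφ, reassoc_of% hi₂, he', hj₂]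
      exact (biprod.map_snd_assoc s s' _).symm

lemma preservesBinaryProducts_of_isLocalization {D : Type*} [Category D] (L : A ⥤ D)
    [L.IsLocalization S] (hid : ∀ X : A, S (𝟙 X))
    (hsum : ∀ ⦃X Y X' Y' : A⦄ (s : X ⟶ Y) (s' : X' ⟶ Y'), S s → S s' → S (biprod.map s s')) :
    PreservesLimitsOfShape (Discrete WalkingPair) L :=
  have := isLocalization_isoClosure L S
  have := isStableUnderProductsOfShape_walkingPair_isoClosure hsum
  have : S.isoClosure.ContainsIdentities := ⟨fun X => S.le_isoClosure _ (hid X)⟩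
  Localization.preservesProductsOfShape L S.isoClosure WalkingPair

end PreservesProducts

section Localization

variable {A : Type*} [Category A] [Preadditive A] [HasBinaryBiproducts A]
  {S : MorphismProperty A} [PreservesLimitsOfShape (Discrete WalkingPair) S.Q]

/-- The sum of two morphisms in the localization of a preadditive category, when the localization
functor preserves binary products. -/
noncomputable def localizationAdd {X Y : S.Localization} (f g : X ⟶ Y) : X ⟶ Y :=
  addAlong (Y := (Localization.Construction.objEquiv S).symm Y) S.Q f g

lemma comp_localizationAdd {W X Y : S.Localization} (h : W ⟶ X) (f g : X ⟶ Y) :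
    h ≫ localizationAdd f g = localizationAdd (h ≫ f) (h ≫ g) :=
  comp_addAlong (L := S.Q) (Y := (Localization.Construction.objEquiv S).symm Y) h f g

lemma localizationAdd_comp {W X Y : S.Localization} (f g : W ⟶ X) (h : X ⟶ Y) :
    localizationAdd f g ≫ h = localizationAdd (f ≫ h) (g ≫ h) := by
  let P : MorphismProperty S.Localization := fun X Y h => ∀ ⦃W : S.Localization⦄ (f g : W ⟶ X),
    localizationAdd f g ≫ h = localizationAdd (f ≫ h) (g ≫ h)
  have : P.IsStableUnderComposition := ⟨fun f g hf hg W a b => by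
    rw [← Category.assoc, hf, hg, Category.assoc, Category.assoc]⟩
  have hP : P = ⊤ := Localization.Construction.morphismProperty_eq_top' P
    (fun _ _ a _ f g => addAlong_comp_map_right f g a) fun X Y e he W f g => by
      rw [← cancel_mono e.hom, he]
      simp
  exact (hP ▸ trivial : P h) f g

variable (S)

/-- The preadditive structure on the localization of a preadditive category with respect to `S`,
when the localization functor preserves binary products. -/
@[reducible]
noncomputable def localizationPreadditive : Preadditive S.Localization where
  homGroup X Y :=
    let X' : A := (Localization.Construction.objEquiv S).symm X
    let Y' : A := (Localization.Construction.objEquiv S).symm Y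
    letI : Add (X ⟶ Y) := ⟨localizationAdd⟩
    letI : Zero (X ⟶ Y) := ⟨S.Q.map (0 : X' ⟶ Y')⟩
    letI : Neg (X ⟶ Y) := ⟨fun f => f ≫ (S.Q.map (-𝟙 Y') : S.Q.obj Y' ⟶ S.Q.obj Y')⟩
    { nsmul := nsmulRec
      zsmul := zsmulRec
      add_assoc := addAlong_assoc (L := S.Q) (Y := Y')
      add_comm := addAlong_comm (L := S.Q) (Y := Y')
      zero_add := map_zero_addAlong (L := S.Q) (X := X') (Y := Y')
      add_zero := fun f => (addAlong_comm (L := S.Q) (Y := Y') f _).trans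
        (map_zero_addAlong (L := S.Q) (X := X') (Y := Y') f)
      neg_add_cancel := fun f => (comp_map_neg_addAlong (L := S.Q) (Y := Y') f).trans
        (comp_map_zero (L := S.Q) (X := X') (Y := Y') f) }
  add_comp _ _ _ := localizationAdd_comp
  comp_add _ _ _ := comp_localizationAdd

lemma additive_Q :
    letI := localizationPreadditive S
    S.Q.Additive :=
  letI := localizationPreadditive S
  { map_add := (addAlong_map (L := S.Q) _ _).symm }

end Localization

section Comparison

lemma additive_of_essSurj_of_comp {A D E : Type*} [Category A] [Category D] [Category E]
    [Preadditive A] [Preadditive D] [Preadditive E] [HasBinaryBiproducts A] (L : A ⥤ D)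
    [L.Additive] [L.EssSurj] (R : D ⥤ E) [(L ⋙ R).Additive] : R.Additive where
  map_add {X Y f g} := by
    let e := L.objObjPreimageIso Y
    obtain ⟨k, ⟨hf, hg⟩, -⟩ := existsUnique_comp_map_fst_snd L (f ≫ e.inv) (g ≫ e.inv)
    have hR (a b : L.objPreimage Y ⊞ L.objPreimage Y ⟶ L.objPreimage Y) :
        R.map (L.map (a + b)) = R.map (L.map a) + R.map (L.map b) :=
      (L ⋙ R).map_add
    rw [← cancel_mono (R.map e.inv), Preadditive.add_comp, ← R.map_comp, ← R.map_comp,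
      ← R.map_comp, Preadditive.add_comp, ← hf, ← hg, ← Preadditive.comp_add, ← L.map_add]
    simp only [R.map_comp, hR, Preadditive.comp_add]

variable {A : Type u} [Category.{v} A] [Preadditive A] [HasZeroObject A]
  {D : Type u'} [Category.{v'} D] [Preadditive D] [HasZeroObject D]
  {S : MorphismProperty A} (L : A ⥤ D) [L.Additive]

/-- An additive functor commutes with the embeddings into the homotopy categories. -/
noncomputable def iotaACompMapHomotopyCategoryIso :
    iotaA ⋙ L.mapHomotopyCategory (.up ℤ) ≅ L ⋙ iotaA :=
  Functor.isoWhiskerLeft (HomologicalComplex.single A (.up ℤ) 0)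
      (L.mapHomotopyCategoryFactors (.up ℤ)) ≪≫
    Functor.isoWhiskerRight
      (HomologicalComplex.singleMapHomologicalComplex L (.up ℤ) 0) homotopyQ

lemma isIso_mapHomotopyCategory_map_iotaA_iff {P Q : A} (p : P ⟶ Q) :
    IsIso ((L.mapHomotopyCategory (.up ℤ)).map (iotaA.map p)) ↔ IsIso (L.map p) := by
  rw [← isIso_iff_of_reflects_iso (L.map p) (iotaA (A := D))]
  exact NatIso.isIso_map_iff (iotaACompMapHomotopyCategoryIso L) p

variable [HasFiniteBiproducts A] [HasFiniteBiproducts D] {L}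

lemma isZero_mapHomotopyCategory_obj (hL : S.IsInvertedBy L)
    {Z : HomotopyCategory A (.up ℤ)} (hZ : genSub (coneSet S) Z) :
    IsZero ((L.mapHomotopyCategory (.up ℤ)).obj Z) := by
  induction hZ with
  | of X hX =>
    obtain ⟨P, Q, s, hs, rfl⟩ := hX
    obtain ⟨i, j, hT⟩ := exists_distTriang_twoComplex s
    have hT' := (L.mapHomotopyCategory (.up ℤ)).map_distinguished _ hT
    exact (Triangle.isZero₃_iff_isIso₁ _ hT').2
      ((isIso_mapHomotopyCategory_map_iotaA_iff L s).2 (hL s hs))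
  | zero X hX => exact Functor.map_isZero _ hX
  | shift X n _ ih =>
    exact (Functor.map_isZero (shiftFunctor _ n) ih).of_iso
      (((L.mapHomotopyCategory (.up ℤ)).commShiftIso n).app X)
  | ext₂ T hT _ _ ih₁ ih₃ =>
    exact Triangle.isZero₂_of_isZero₁₃ _
      ((L.mapHomotopyCategory (.up ℤ)).map_distinguished _ hT) ih₁ ih₃

lemma isInvertedBy_mapHomotopyCategory (hL : S.IsInvertedBy L) :
    (genSubcat (coneSet S)).trW.IsInvertedBy (L.mapHomotopyCategory (.up ℤ)) := by
  rintro X Y s ⟨Z, i, j, hT, hZ⟩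
  have hT' := (L.mapHomotopyCategory (.up ℤ)).map_distinguished _ hT
  exact (Triangle.isZero₃_iff_isIso₁ _ hT').1 (isZero_mapHomotopyCategory_obj hL hZ)

lemma isIso_map_of_trW_iotaA_map (hL : S.IsInvertedBy L) {P Q : A} {p : P ⟶ Q}
    (hp : (genSubcat (coneSet S)).trW (iotaA.map p)) : IsIso (L.map p) :=
  (isIso_mapHomotopyCategory_map_iotaA_iff L p).1 (isInvertedBy_mapHomotopyCategory hL _ hp)

variable [L.IsLocalization S] {R : D ⥤ (genSubcat (coneSet S)).trW.Localization}

lemma faithful_of_comp_iso_uBig (e : L ⋙ R ≅ uBig S) : R.Faithful := by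
  let K : HomotopyCategory A (.up ℤ) ⥤ HomotopyCategory D (.up ℤ) := L.mapHomotopyCategory (.up ℤ)
  have hK := isInvertedBy_mapHomotopyCategory (Localization.inverts L S)
  let M := Localization.lift K hK (locQ S)
  have eM : L ⋙ R ⋙ M ≅ L ⋙ iotaA :=
    Functor.isoWhiskerRight e M ≪≫ Functor.isoWhiskerLeft iotaA (Localization.fac K hK (locQ S)) ≪≫
      iotaACompMapHomotopyCategoryIso L
  exact Functor.Faithful.of_comp_iso (Localization.liftNatIso L S _ _ (R ⋙ M) iotaA eM)

lemma full_of_comp_iso_uBig (e : L ⋙ R ≅ uBig S) : R.Full := by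
  have : L.EssSurj := Localization.essSurj L S
  have : (L ⋙ R).Additive := Functor.additive_of_iso e.symm
  have : R.Additive := additive_of_essSurj_of_comp L R
  refine R.full_of_comp_essSurj L fun X Y φ => ?_
  obtain ⟨P, Q, p, hp, a, b, g, h⟩ := exists_eq_map_add_map_comp_inv_comp_map
    isPartialTilting_range_iotaA (shiftExtClosure_range_iotaA_of_mem_coneSet S) (locQ S)
    (e.inv.app X ≫ φ ≫ e.hom.app Y)
  have : IsIso (L.map p) := isIso_map_of_trW_iotaA_map (Localization.inverts L S) hp
  have hR {X Y : A} (f : X ⟶ Y) :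
      R.map (L.map f) = e.hom.app X ≫ (locQ S).map (iotaA.map f) ≫ e.inv.app Y :=
    (NatIso.naturality_2 e f).symm
  have hR' : R.map (inv (L.map p)) =
      e.hom.app Q ≫ (Localization.isoOfHom (locQ S) _ (iotaA.map p) hp).inv ≫ e.inv.app P := by
    rw [R.map_inv]
    exact IsIso.inv_eq_of_hom_inv_id (by simp [hR])
  refine ⟨L.map a + L.map b ≫ inv (L.map p) ≫ L.map g, ?_⟩
  rw [← cancel_epi (e.inv.app X), ← cancel_mono (e.hom.app Y), Category.assoc, Category.assoc, h]
  simp [hR, hR']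

end Comparison

section Inverse

lemma exists_inverse_of_bijective_obj {C D : Type*} [Category C] [Category D] (F : C ⥤ D) [F.Full]
    [F.Faithful] (hF : Function.Bijective F.obj) :
    ∃ G : D ⥤ C, F ⋙ G = 𝟭 C ∧ G ⋙ F = 𝟭 D := by
  obtain ⟨o, hl, hr⟩ := Function.bijective_iff_has_inverse.1 hF
  let G : D ⥤ C :=
    { obj := o
      map f := F.preimage (eqToHom (hr _) ≫ f ≫ eqToHom (hr _).symm)
      map_id X := F.map_injective (by simp)
      map_comp f g := F.map_injective (by simp) }
  exact ⟨G, CategoryTheory.Functor.ext hl fun X Y f => F.map_injective (by simp [G, eqToHom_map]),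
    CategoryTheory.Functor.ext hr fun X Y f => F.map_preimage _⟩

end Inverse

section Inclusion

variable {A : Type u} [Category.{v} A] [Preadditive A] [HasZeroObject A] [HasFiniteBiproducts A]
  (S : MorphismProperty A)

/-- The inclusion of `A[S⁻¹]_add` into the Verdier quotient. -/
noncomputable def addLocInclusion : AddLoc S ⥤ (genSubcat (coneSet S)).trW.Localization where
  obj X := (uBig S).obj X
  map f := f

instance : (addLocInclusion S).Full := ⟨fun f => ⟨f, rfl⟩⟩

instance : (addLocInclusion S).Faithful := ⟨id⟩

lemma isInvertedBy_uFun : S.IsInvertedBy (uFun S) := fun _ _ s hs =>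
  have : IsIso ((addLocInclusion S).map ((uFun S).map s)) := isInvertedBy_uBig S s hs
  isIso_of_reflects_iso _ (addLocInclusion S)

end Inclusion

/-- Corollary: if `S` contains all identities and is closed under direct sums, then the
canonical comparison functor from the Gabriel–Zisman localization `A[S⁻¹]` to
`A[S⁻¹]_add` is an isomorphism of categories. -/
theorem statement1 {A : Type u} [Category.{v} A] [Preadditive A] [HasZeroObject A]
    [HasFiniteBiproducts A] (S : MorphismProperty A)
    (hid : ∀ X : A, S (𝟙 X))
    (hsum : ∀ ⦃X Y X' Y' : A⦄ (s : X ⟶ Y) (s' : X' ⟶ Y'),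
      S s → S s' → S (biprod.map s s')) :
    ∃ Qc : S.Localization ⥤ AddLoc S,
      (S.Q ⋙ Qc = uFun S) ∧
      ∃ G : AddLoc S ⥤ S.Localization,
        Qc ⋙ G = 𝟭 S.Localization ∧ G ⋙ Qc = 𝟭 (AddLoc S) := by
  have := preservesBinaryProducts_of_isLocalization S.Q hid hsum
  let _ : Preadditive S.Localization := localizationPreadditive S
  have : S.Q.Additive := additive_Q S
  have : S.Q.EssSurj := Localization.essSurj S.Q S
  have : HasZeroObject S.Localization := S.Q.hasZeroObject_of_additive
  have : HasFiniteProducts S.Localization := S.Q.hasFiniteProducts_of_additive_of_essSurj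
  have : HasFiniteBiproducts S.Localization := .of_hasFiniteProducts
  let Qc : S.Localization ⥤ AddLoc S := Localization.Construction.lift _ (isInvertedBy_uFun S)
  have hQc : S.Q ⋙ Qc = uFun S := Localization.Construction.fac _ _
  let e : S.Q ⋙ Qc ⋙ addLocInclusion S ≅ uBig S :=
    Functor.isoWhiskerRight (eqToIso hQc) (addLocInclusion S)
  have : Qc.Faithful :=
    have := faithful_of_comp_iso_uBig e
    .of_comp Qc (addLocInclusion S)
  have : Qc.Full :=
    have := full_of_comp_iso_uBig e
    .of_comp_faithful Qc (addLocInclusion S)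
  exact ⟨Qc, hQc, exists_inverse_of_bijective_obj Qc
    (Localization.Construction.objEquiv S).symm.bijective⟩
end

section
/- Let C be a triangulated category, B a weakly negative set of objects of C, and 𝔻 the triangulated subcategory of C generated by B. Let n be an integer, X an object of C with Hom(X, Z') = 0 for all Z' ∈ B_{≥1}, Y an object of C with Hom(Z', Y) = 0 for all Z' ∈ B_{≤ n−2}, and let e : X → Y in C/𝔻 be presented as h ∘ q⁻¹ with h ∈ C(Z, Y), q ∈ C(Z, X) and Cone(q) ∈ B_{[n,0]}. Then e = 0 in C/𝔻 if and only if h factors in C through an element of B_{[n−1,0]}. -/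
open CategoryTheory Limits Pretriangulated ZeroObject

universe v u v' u'

section TriangulatedPrelude

variable {C : Type u} [Category.{v} C] [HasZeroObject C] [HasShift C ℤ] [Preadditive C]
  [∀ n : ℤ, (shiftFunctor C n).Additive] [Pretriangulated C]

instance genSubcat_isTriangulated (B : Set C) : (genSubcat B).IsTriangulated where
  exists_zero := ⟨0, isZero_zero _, genSub.zero _ (isZero_zero _)⟩
  isStableUnderShiftBy n := ⟨fun X h => genSub.shift X n h⟩
  ext₂' T hT h₁ h₃ := ObjectProperty.le_isoClosure _ _ (genSub.ext₂ T hT h₁ h₃)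

end TriangulatedPrelude

/-!
A morphism `h` of `C` vanishes in the Verdier quotient by `𝔻` if and only if it factors in `C`
through some `D ∈ 𝔻`, and `D` lies in some `B_{[i,j]}`. Weak negativity gives
`Hom(B_{≤m}, B_{≥m+1}[1]) = 0`, so every distinguished triangle `R ⟶ E ⟶ L` with `R ∈ B_{≥m+1}`
and `L ∈ B_{≤m}` splits. Hence the extensions that build `D` can be reordered into a distinguished
triangle `L ⟶ D ⟶ R` with `L ∈ B_{[i,m]}` and `R ∈ B_{[m+1,j]}`. If the source of `h` has no
nonzero maps to `B_{≥b+1}` and the target none from `B_{≤a-1}`, then cutting `D` at `b`, and the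
lower piece again at `a-1`, replaces `D` by an object of `B_{[a,b]}`. In a roof `h ∘ q⁻¹` the
orthogonality of `X` to `B_{≥b+1}` passes to `Z`, which is an extension of `X` by `Cone(q)[-1]`.
-/

section ExtensionClosure

variable {C : Type u} [Category.{v} C] [HasZeroObject C] [HasShift C ℤ] [Preadditive C]
  [∀ n : ℤ, (shiftFunctor C n).Additive] [Pretriangulated C] {E F : Set C}

instance extClosure_containsZero : ObjectProperty.ContainsZero (extClosure E) where
  exists_zero := ⟨0, isZero_zero _, .zero _ (isZero_zero _)⟩

instance extClosure_isTriangulatedClosed₂ :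
    ObjectProperty.IsTriangulatedClosed₂ (extClosure E) where
  ext₂' T hT h₁ h₃ := ObjectProperty.le_isoClosure _ _ (.ext₂ T hT h₁ h₃)

instance extClosure_isClosedUnderIsomorphisms :
    ObjectProperty.IsClosedUnderIsomorphisms (extClosure E) where
  of_iso {X Y} e hX := by
    have hT : Triangle.mk e.hom (0 : Y ⟶ (0 : C)) 0 ∈ distTriang C :=
      (Triangle.distinguished_iff_of_isZero₃ _ (isZero_zero _)).2 (inferInstanceAs (IsIso e.hom))
    exact .ext₂ _ hT hX (.zero _ (isZero_zero _))

lemma extClosure_le {P : ObjectProperty C} [P.ContainsZero] [P.IsTriangulatedClosed₂]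
    [P.IsClosedUnderIsomorphisms] (hE : ∀ X ∈ E, P X) : extClosure E ≤ P := by
  intro X hX
  induction hX with
  | of X hX => exact hE X hX
  | zero X hX => exact P.prop_of_isZero hX
  | ext₂ T hT _ _ h₁ h₃ => exact P.ext_of_isTriangulatedClosed₂ T hT h₁ h₃

lemma extClosure_shift {n : ℤ} (hEF : ∀ X ∈ E, extClosure F (X⟦n⟧)) {X : C}
    (hX : extClosure E X) : extClosure F (X⟦n⟧) := by
  induction hX with
  | of X hX => exact hEF X hX
  | zero X hX => exact .zero _ ((shiftFunctor C n).map_isZero hX)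
  | ext₂ T hT _ _ h₁ h₃ => exact .ext₂ _ (T.shift_distinguished hT n) h₁ h₃

lemma extClosure_hom_eq_zero (hEF : ∀ X ∈ E, ∀ Y ∈ F, ∀ f : X ⟶ Y, f = 0) {X Y : C}
    (hX : extClosure E X) (hY : extClosure F Y) (f : X ⟶ Y) : f = 0 := by
  have hF : extClosure F ≤ ObjectProperty.rightOrthogonal (· ∈ E) :=
    extClosure_le fun Y hY X f hX ↦ hEF X hX Y hY f
  have hE : extClosure E ≤ ObjectProperty.leftOrthogonal (extClosure F) :=
    extClosure_le fun X hX Y f hY ↦ hF Y hY f hX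
  exact hE X hX f hY

end ExtensionClosure

section ExtensionProduct

variable {C : Type u} [Category.{v} C] [HasZeroObject C] [HasShift C ℤ] [Preadditive C]
  [∀ n : ℤ, (shiftFunctor C n).Additive] [Pretriangulated C] {P Q : ObjectProperty C}

lemma extensionProduct_le_swap_of_hom_shift_eq_zero
    (hPQ : ∀ ⦃L R : C⦄, P L → Q R → ∀ f : L ⟶ R⟦(1 : ℤ)⟧, f = 0) :
    Q.extensionProduct P ≤ P.extensionProduct Q := by
  rintro X ⟨R, L, f, g, δ, hT, hR, hL⟩
  obtain ⟨e, -⟩ := exists_iso_binaryBiproduct_of_distTriang _ hT (hPQ hL hR δ)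
  exact ObjectProperty.prop_of_iso _ (biprod.braiding L R ≪≫ e.symm)
    ⟨_, _, _, _, _, binaryBiproductTriangle_distinguished L R, hL, hR⟩

lemma extensionProduct_isTriangulatedClosed₂ [IsTriangulated C]
    [P.IsTriangulatedClosed₂] [P.IsClosedUnderIsomorphisms]
    [Q.IsTriangulatedClosed₂] [Q.IsClosedUnderIsomorphisms]
    (hQP : Q.extensionProduct P ≤ P.extensionProduct Q) :
    (P.extensionProduct Q).IsTriangulatedClosed₂ := by
  have hPP : P.extensionProduct P ≤ P :=
    ObjectProperty.extensionProduct_le_of_isTriangulatedClosed₂ le_rfl le_rfl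
  have hQQ : Q.extensionProduct Q ≤ Q :=
    ObjectProperty.extensionProduct_le_of_isTriangulatedClosed₂ le_rfl le_rfl
  have hPQPQ : (P.extensionProduct Q).extensionProduct (P.extensionProduct Q) ≤
      P.extensionProduct Q :=
    calc (P.extensionProduct Q).extensionProduct (P.extensionProduct Q)
      _ = P.extensionProduct ((Q.extensionProduct P).extensionProduct Q) := by
          simp only [ObjectProperty.extensionProduct_assoc]
      _ ≤ P.extensionProduct ((P.extensionProduct Q).extensionProduct Q) :=
          ObjectProperty.monotone_extensionProduct_right _
            (ObjectProperty.monotone_extensionProduct_left _ hQP)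
      _ = (P.extensionProduct P).extensionProduct (Q.extensionProduct Q) := by
          simp only [ObjectProperty.extensionProduct_assoc]
      _ ≤ P.extensionProduct (Q.extensionProduct Q) :=
          ObjectProperty.monotone_extensionProduct_left _ hPP
      _ ≤ P.extensionProduct Q := ObjectProperty.monotone_extensionProduct_right _ hQQ
  exact .mk' fun T hT h₁ h₃ ↦ hPQPQ _ ⟨_, _, _, _, _, hT, h₁, h₃⟩

end ExtensionProduct

section VerdierQuotient

variable {C : Type u} [Category.{v} C] [HasZeroObject C] [HasShift C ℤ] [Preadditive C]
  [∀ n : ℤ, (shiftFunctor C n).Additive] [Pretriangulated C] {P : ObjectProperty C}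
  {D : Type u'} [Category.{v'} D] [HasZeroMorphisms D]
  (L : C ⥤ D) [L.PreservesZeroMorphisms] [L.IsLocalization P.trW]

lemma isZero_map_of_isLocalization_trW [P.IsStableUnderShift ℤ] {T : C} (hT : P T) :
    IsZero (L.obj T) := by
  have hzero : P.trW (0 : T ⟶ 0) :=
    (ObjectProperty.trW_iff' ..).2 ⟨T, 𝟙 T, 0, contractible_distinguished T, hT⟩
  have : IsIso (L.map (0 : T ⟶ 0)) := Localization.inverts L P.trW _ hzero
  exact (L.map_isZero (isZero_zero C)).of_iso (asIso (L.map (0 : T ⟶ 0)))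

lemma map_eq_zero_iff_exists_factorization_of_isLocalization_trW [IsTriangulated C]
    [P.IsTriangulated] {X Y : C} (f : X ⟶ Y) :
    L.map f = 0 ↔ ∃ T, P T ∧ ∃ (u : X ⟶ T) (v : T ⟶ Y), u ≫ v = f := by
  constructor
  · intro hf
    rw [← L.map_zero, MorphismProperty.map_eq_iff_postcomp L P.trW] at hf
    obtain ⟨Y', s, hs, hfs⟩ := hf
    obtain ⟨T, v, δ, hT, hPT⟩ := (ObjectProperty.trW_iff' _ s).1 hs
    obtain ⟨u, hu⟩ := Triangle.coyoneda_exact₂ _ hT f (hfs.trans zero_comp)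
    exact ⟨T, hPT, u, v, hu.symm⟩
  · rintro ⟨T, hPT, u, v, rfl⟩
    rw [L.map_comp, (isZero_map_of_isLocalization_trW L hPT).eq_of_tgt (L.map u) 0, zero_comp]

end VerdierQuotient

section ShiftClosure

variable {C : Type u} [Category.{v} C] [HasZeroObject C] [HasShift C ℤ] [Preadditive C]
  [∀ n : ℤ, (shiftFunctor C n).Additive] [Pretriangulated C] {D : Set C} {i j k l : ℤ} {X Y : C}

instance shiftClosure_containsZero :
    ObjectProperty.ContainsZero (C := C) (shiftClosure D i j) :=
  extClosure_containsZero

instance shiftClosure_isTriangulatedClosed₂ :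
    ObjectProperty.IsTriangulatedClosed₂ (C := C) (shiftClosure D i j) :=
  extClosure_isTriangulatedClosed₂

instance shiftClosure_isClosedUnderIsomorphisms :
    ObjectProperty.IsClosedUnderIsomorphisms (C := C) (shiftClosure D i j) :=
  extClosure_isClosedUnderIsomorphisms

lemma shift_mem_shiftClosure_of_mem (hX : X ∈ D) (hi : i ≤ l) (hj : l ≤ j) :
    X⟦l⟧ ∈ shiftClosure D i j :=
  .of _ ⟨X, l, hi, hj, hX, rfl⟩

lemma shiftClosure_mono (hi : k ≤ i) (hj : j ≤ l) (hX : X ∈ shiftClosure D i j) :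
    X ∈ shiftClosure D k l := by
  refine extClosure_le (P := shiftClosure D k l) ?_ X hX
  rintro _ ⟨A, m, him, hmj, hA, rfl⟩
  exact shift_mem_shiftClosure_of_mem hA (hi.trans him) (hmj.trans hj)

lemma mem_shiftClosureGE (hX : X ∈ shiftClosure D i j) : X ∈ shiftClosureGE D i :=
  ⟨max i j, le_max_left i j, shiftClosure_mono le_rfl (le_max_right i j) hX⟩

lemma mem_shiftClosureLE (hX : X ∈ shiftClosure D i j) : X ∈ shiftClosureLE D j :=
  ⟨min i j, min_le_right i j, shiftClosure_mono (min_le_left i j) le_rfl hX⟩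

lemma shift_mem_shiftClosure (n : ℤ) (hX : X ∈ shiftClosure D i j) :
    X⟦n⟧ ∈ shiftClosure D (i + n) (j + n) := by
  refine extClosure_shift ?_ hX
  rintro _ ⟨A, m, him, hmj, hA, rfl⟩
  exact ObjectProperty.prop_of_iso _ ((shiftFunctorAdd C m n).app A)
    (shift_mem_shiftClosure_of_mem hA (by lia) (by lia))

lemma genSubcat_of_mem_shiftClosure (hX : X ∈ shiftClosure D i j) : genSubcat D X := by
  change extClosure _ X at hX
  induction hX with
  | of _ hX =>
    obtain ⟨A, m, -, -, hA, rfl⟩ := hX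
    exact .shift A m (.of A hA)
  | zero X hX => exact .zero X hX
  | ext₂ T hT _ _ h₁ h₃ => exact .ext₂ T hT h₁ h₃

lemma exists_mem_shiftClosure_of_genSubcat (hX : genSubcat D X) :
    ∃ i j : ℤ, X ∈ shiftClosure D i j := by
  induction hX with
  | of X hX =>
    exact ⟨0, 0, ObjectProperty.prop_of_iso (shiftClosure D 0 0) ((shiftFunctorZero C ℤ).app X)
      (shift_mem_shiftClosure_of_mem hX le_rfl le_rfl)⟩
  | zero X hX => exact ⟨0, 0, .zero X hX⟩
  | shift X n _ ih =>
    obtain ⟨i, j, hX⟩ := ih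
    exact ⟨i + n, j + n, shift_mem_shiftClosure n hX⟩
  | ext₂ T hT _ _ ih₁ ih₃ =>
    obtain ⟨i, j, h₁⟩ := ih₁
    obtain ⟨k, l, h₃⟩ := ih₃
    exact ⟨min i k, max j l, .ext₂ T hT
      (shiftClosure_mono (min_le_left i k) (le_max_left j l) h₁)
      (shiftClosure_mono (min_le_right i k) (le_max_right j l) h₃)⟩

end ShiftClosure

namespace WeaklyNegative

variable {C : Type u} [Category.{v} C] [HasZeroObject C] [HasShift C ℤ] [Preadditive C]
  [∀ n : ℤ, (shiftFunctor C n).Additive] [Pretriangulated C] {D : Set C}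

omit [Pretriangulated C] in
lemma shift_hom_shift_eq_zero (hD : WeaklyNegative D) {X Y : C} (hX : X ∈ D) (hY : Y ∈ D)
    {m n : ℤ} (hmn : m + 2 ≤ n) (f : X⟦m⟧ ⟶ Y⟦n⟧) : f = 0 := by
  let e : Y⟦n⟧ ≅ Y⟦n - m⟧⟦m⟧ := (shiftFunctorAdd' C (n - m) m n (by lia)).app Y
  obtain ⟨g, hg⟩ := (shiftFunctor C m).map_surjective (f ≫ e.hom)
  rw [← cancel_mono e.hom, ← hg, hD.2 X hX Y hY (n - m) (by lia) g, Functor.map_zero, zero_comp]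

lemma hom_eq_zero_of_mem_shiftClosure (hD : WeaklyNegative D) {i j k l : ℤ} (hjk : j + 2 ≤ k)
    {X Y : C} (hX : X ∈ shiftClosure D i j) (hY : Y ∈ shiftClosure D k l) (f : X ⟶ Y) :
    f = 0 := by
  refine extClosure_hom_eq_zero ?_ hX hY f
  rintro _ ⟨A, m, -, hmj, hA, rfl⟩ _ ⟨A', n, hkn, -, hA', rfl⟩ g
  exact hD.shift_hom_shift_eq_zero hA hA' (by lia) g

lemma exists_distTriang_of_mem_shiftClosure [IsTriangulated C] (hD : WeaklyNegative D)
    (m : ℤ) {i j : ℤ} {X : C} (hX : X ∈ shiftClosure D i j) :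
    ∃ L ∈ shiftClosure D i m, ∃ R ∈ shiftClosure D (m + 1) j,
      ∃ (f : L ⟶ X) (g : X ⟶ R) (δ : R ⟶ L⟦(1 : ℤ)⟧), Triangle.mk f g δ ∈ distTriang C := by
  let lower : ObjectProperty C := shiftClosure D i m
  let upper : ObjectProperty C := shiftClosure D (m + 1) j
  have : (lower.extensionProduct upper).IsTriangulatedClosed₂ :=
    extensionProduct_isTriangulatedClosed₂ <|
      extensionProduct_le_swap_of_hom_shift_eq_zero fun L R hL hR ↦
        hD.hom_eq_zero_of_mem_shiftClosure (by lia) hL (shift_mem_shiftClosure 1 hR)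
  have : (lower.extensionProduct upper).ContainsZero :=
    ⟨0, isZero_zero C, lower.le_extensionProduct_left upper _ lower.prop_zero⟩
  suffices lower.extensionProduct upper X by
    obtain ⟨L, R, f, g, δ, hT, hL, hR⟩ := this
    exact ⟨L, hL, R, hR, f, g, δ, hT⟩
  refine extClosure_le ?_ X hX
  rintro _ ⟨A, l, hil, hlj, hA, rfl⟩
  obtain hlm | hml := le_or_gt l m
  · exact lower.le_extensionProduct_left upper _ (shift_mem_shiftClosure_of_mem hA hil hlm)
  · exact lower.le_extensionProduct_right _ (shift_mem_shiftClosure_of_mem hA hml hlj)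

lemma hom_eq_zero_of_distTriang (hD : WeaklyNegative D) {b : ℤ} {Z X W : C} {q : Z ⟶ X}
    {c : X ⟶ W} {d : W ⟶ Z⟦(1 : ℤ)⟧} (hT : Triangle.mk q c d ∈ distTriang C)
    (hW : W ∈ shiftClosureLE D b) (hX : ∀ R ∈ shiftClosureGE D (b + 1), ∀ f : X ⟶ R, f = 0) :
    ∀ R ∈ shiftClosureGE D (b + 1), ∀ f : Z ⟶ R, f = 0 := by
  obtain ⟨k, -, hW⟩ := hW
  rintro R ⟨l, hl, hR⟩ f
  have hWR : ∀ g : W⟦(-1 : ℤ)⟧ ⟶ R, g = 0 :=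
    hD.hom_eq_zero_of_mem_shiftClosure (by lia) (shift_mem_shiftClosure (-1) hW) hR
  obtain ⟨g, rfl⟩ := Triangle.yoneda_exact₂ _ (inv_rot_of_distTriang _ hT) f (hWR _)
  exact (congrArg (q ≫ ·) (hX R ⟨l, hl, hR⟩ g)).trans comp_zero

lemma exists_factorization_shiftClosure [IsTriangulated C] (hD : WeaklyNegative D) {a b : ℤ}
    {Z Y T : C} (hZ : ∀ R ∈ shiftClosureGE D (b + 1), ∀ f : Z ⟶ R, f = 0)
    (hY : ∀ L ∈ shiftClosureLE D (a - 1), ∀ f : L ⟶ Y, f = 0)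
    (hT : genSubcat D T) (u : Z ⟶ T) (v : T ⟶ Y) :
    ∃ M ∈ shiftClosure D a b, ∃ (u' : Z ⟶ M) (v' : M ⟶ Y), u' ≫ v' = u ≫ v := by
  obtain ⟨i, j, hT⟩ := exists_mem_shiftClosure_of_genSubcat hT
  obtain ⟨N, hN, R, hR, f, g, δ, hNTR⟩ := hD.exists_distTriang_of_mem_shiftClosure b hT
  obtain ⟨(u₁ : Z ⟶ N), rfl : u = u₁ ≫ f⟩ :=
    Triangle.coyoneda_exact₂ _ hNTR u (hZ R (mem_shiftClosureGE hR) _)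
  obtain ⟨L, hL, M, hM, f', g', δ', hLNM⟩ := hD.exists_distTriang_of_mem_shiftClosure (a - 1) hN
  obtain ⟨(v' : M ⟶ Y), hv' : f ≫ v = g' ≫ v'⟩ :=
    Triangle.yoneda_exact₂ _ hLNM (f ≫ v) (hY L (mem_shiftClosureLE hL) _)
  rw [sub_add_cancel] at hM
  exact ⟨M, hM, u₁ ≫ g', v', by simp only [Category.assoc, hv']⟩

theorem map_Q_eq_zero_iff [IsTriangulated C] (hD : WeaklyNegative D) {a b : ℤ} {Z Y : C}
    (hZ : ∀ R ∈ shiftClosureGE D (b + 1), ∀ f : Z ⟶ R, f = 0)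
    (hY : ∀ L ∈ shiftClosureLE D (a - 1), ∀ f : L ⟶ Y, f = 0) (h : Z ⟶ Y) :
    (genSubcat D).trW.Q.map h = 0 ↔
      ∃ T ∈ shiftClosure D a b, ∃ (u : Z ⟶ T) (v : T ⟶ Y), u ≫ v = h := by
  rw [map_eq_zero_iff_exists_factorization_of_isLocalization_trW (P := genSubcat D)]
  constructor
  · rintro ⟨T, hT, u, v, rfl⟩
    exact hD.exists_factorization_shiftClosure hZ hY hT u v
  · rintro ⟨T, hT, u, v, rfl⟩
    exact ⟨T, genSubcat_of_mem_shiftClosure hT, u, v, rfl⟩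

end WeaklyNegative

theorem statement6_general {C : Type u} [Category.{v} C] [HasZeroObject C] [HasShift C ℤ]
    [Preadditive C] [∀ n : ℤ, (shiftFunctor C n).Additive] [Pretriangulated C]
    [IsTriangulated C] {B : Set C} (hB : WeaklyNegative B) {a b : ℤ} {X Y Z W : C}
    (hX : ∀ R ∈ shiftClosureGE B (b + 1), ∀ f : X ⟶ R, f = 0)
    (hY : ∀ L ∈ shiftClosureLE B (a - 1), ∀ f : L ⟶ Y, f = 0)
    {e : (genSubcat B).trW.Q.obj X ⟶ (genSubcat B).trW.Q.obj Y} {h : Z ⟶ Y} {q : Z ⟶ X}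
    {c : X ⟶ W} {d : W ⟶ Z⟦(1 : ℤ)⟧} (hT : Triangle.mk q c d ∈ distTriang C)
    (hW : W ∈ shiftClosureLE B b)
    (he : (genSubcat B).trW.Q.map q ≫ e = (genSubcat B).trW.Q.map h) :
    e = 0 ↔ ∃ T ∈ shiftClosure B a b, ∃ (u : Z ⟶ T) (v : T ⟶ Y), u ≫ v = h := by
  have hq : (genSubcat B).trW q := by
    obtain ⟨k, -, hW⟩ := hW
    exact .mk _ hT (genSubcat_of_mem_shiftClosure hW)
  have : IsIso ((genSubcat B).trW.Q.map q) := MorphismProperty.Q_inverts _ q hq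
  rw [← hB.map_Q_eq_zero_iff (hB.hom_eq_zero_of_distTriang hT hW hX) hY h, ← he,
    ← cancel_epi ((genSubcat B).trW.Q.map q), comp_zero]

/-- Proposition: vanishing criterion for a morphism of the Verdier quotient presented
as a roof `h ∘ q⁻¹` with `Cone(q) ∈ B_{[n,0]}`: it vanishes if and only if `h` factors
in `C` through an element of `B_{[n-1,0]}`. -/
theorem statement6 {C : Type u} [Category.{v} C] [HasZeroObject C] [HasShift C ℤ]
    [Preadditive C] [∀ n : ℤ, (shiftFunctor C n).Additive] [Pretriangulated C]
    [IsTriangulated C] (B : Set C) (hB : WeaklyNegative B) (n : ℤ) (X Y : C)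
    (hX : ∀ Z' ∈ shiftClosureGE B 1, ∀ f : X ⟶ Z', f = 0)
    (hY : ∀ Z' ∈ shiftClosureLE B (n - 2), ∀ f : Z' ⟶ Y, f = 0)
    (e : (genSubcat B).trW.Q.obj X ⟶ (genSubcat B).trW.Q.obj Y)
    (Z : C) (h : Z ⟶ Y) (q : Z ⟶ X)
    (hq : ∃ (W : C) (a : X ⟶ W) (b : W ⟶ Z⟦(1 : ℤ)⟧),
      (Triangle.mk q a b ∈ distTriang C) ∧ W ∈ shiftClosure B n 0)
    (hqIso : IsIso ((genSubcat B).trW.Q.map q))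
    (he : (genSubcat B).trW.Q.map q ≫ e = (genSubcat B).trW.Q.map h) :
    e = 0 ↔ ∃ T ∈ shiftClosure B (n - 1) 0, ∃ (a : Z ⟶ T) (b : T ⟶ Y), a ≫ b = h := by
  obtain ⟨W, c, d, hT, hW⟩ := hq
  exact statement6_general hB hX (by rwa [sub_sub]) hT (mem_shiftClosureLE hW) he
end

section
/- The elements of D (the extension-closure of the set of cones of elements of S in K^b(A)) are exactly those complexes that are isomorphic in K^b(A) to the cone of a morphism ⊕_{j=1}^{n} S⁻¹_j → ⊕_{j=1}^{n} S⁰_j given by a lower triangular matrix whose diagonal entries s₁, …, s_n are elements of S (with s_j : S⁻¹_j → S⁰_j) and whose below-diagonal entries f_{kl} : S⁻¹_k → S⁰_l (for k < l) are arbitrary morphisms of A, for some n ≥ 0. -/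
open CategoryTheory Limits Pretriangulated ZeroObject

universe v u v' u'

attribute [local instance] Limits.hasBinaryBiproducts_of_finite_biproducts

/-!
For morphisms `f : P ⟶ Q` and `g : P' ⟶ Q'` placed in the same two degrees, a chain map from the
two-term complex of `g` to the shift of that of `f` is nothing but a morphism `h : P' ⟶ Q`, and
the triangle with this connecting morphism is the one of the degreewise split extension whose
middle term is the two-term complex of the matrix with diagonal `g`, `f` and off-diagonal entry
`h`. Every connecting morphism in the homotopy category comes from a chain map, so an extension of
two triangular complexes is the complex of the block triangular matrix obtained by concatenation.
Conversely, splitting off the last row and column of a triangular matrix exhibits its complex as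
an extension of a smaller triangular complex by the cone of an element of `S`.
-/

section TwoComplex

variable {A : Type u} [Category.{v} A] [Preadditive A] [HasZeroObject A]
  (n : ℤ) {P Q P' Q' P'' Q'' : A}

/-- The canonical identification of the degree `n` term of `twoComplex n f` with the source
of `f`. -/
noncomputable def twoComplexXLeft (f : P ⟶ Q) : (twoComplex n f).X n ≅ P :=
  eqToIso (by simp [twoComplex])

/-- The canonical identification of the degree `n + 1` term of `twoComplex n f` with the target
of `f`. -/
noncomputable def twoComplexXRight (f : P ⟶ Q) : (twoComplex n f).X (n + 1) ≅ Q :=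
  eqToIso (by simp [twoComplex])

lemma twoComplex_d_s11 (f : P ⟶ Q) :
    (twoComplex n f).d n (n + 1) = (twoComplexXLeft n f).hom ≫ f ≫ (twoComplexXRight n f).inv := by
  simp only [twoComplexXLeft, twoComplexXRight, eqToIso.hom, eqToIso.inv]
  simp [twoComplex]

lemma isZero_twoComplex_X_s11 (f : P ⟶ Q) {i : ℤ} (hi : i ≠ n) (hi' : i ≠ n + 1) :
    IsZero ((twoComplex n f).X i) := by
  simpa [twoComplex, hi, hi'] using isZero_zero A

lemma eq_or_eq_add_one_or_isZero_twoComplex_X (f : P ⟶ Q) (i : ℤ) :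
    i = n ∨ i = n + 1 ∨ IsZero ((twoComplex n f).X i) := by
  by_cases hi : i = n
  · exact .inl hi
  · by_cases hi' : i = n + 1
    · exact .inr (.inl hi')
    · exact .inr (.inr (isZero_twoComplex_X_s11 n f hi hi'))

/-- The morphism of graded objects between two-term complexes with components `a` and `b`.
The square formed by `a` and `b` need not commute, so that degreewise retractions and sections
are covered. -/
noncomputable def twoComplexMapX (f : P ⟶ Q) (f' : P' ⟶ Q') (a : P ⟶ P') (b : Q ⟶ Q') (i : ℤ) :
    (twoComplex n f).X i ⟶ (twoComplex n f').X i :=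
  if hi : i = n then
    eqToHom (by simp [twoComplex, hi]) ≫ a ≫ eqToHom (by simp [twoComplex, hi])
  else if hi' : i = n + 1 then
    eqToHom (by simp [twoComplex, hi']) ≫ b ≫ eqToHom (by simp [twoComplex, hi'])
  else 0

lemma twoComplexMapX_left (f : P ⟶ Q) (f' : P' ⟶ Q') (a : P ⟶ P') (b : Q ⟶ Q') :
    twoComplexMapX n f f' a b n =
      (twoComplexXLeft n f).hom ≫ a ≫ (twoComplexXLeft n f').inv := by
  simp [twoComplexMapX, twoComplexXLeft]

lemma twoComplexMapX_right (f : P ⟶ Q) (f' : P' ⟶ Q') (a : P ⟶ P') (b : Q ⟶ Q') :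
    twoComplexMapX n f f' a b (n + 1) =
      (twoComplexXRight n f).hom ≫ b ≫ (twoComplexXRight n f').inv := by
  simp [twoComplexMapX, twoComplexXRight]

lemma twoComplexMapX_id (f : P ⟶ Q) (i : ℤ) : twoComplexMapX n f f (𝟙 P) (𝟙 Q) i = 𝟙 _ := by
  rcases eq_or_eq_add_one_or_isZero_twoComplex_X n f i with rfl | rfl | hi
  · simp [twoComplexMapX_left]
  · simp [twoComplexMapX_right]
  · exact hi.eq_of_src _ _

lemma twoComplexMapX_comp (f : P ⟶ Q) (f' : P' ⟶ Q') (f'' : P'' ⟶ Q'')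
    (a : P ⟶ P') (b : Q ⟶ Q') (a' : P' ⟶ P'') (b' : Q' ⟶ Q'') (i : ℤ) :
    twoComplexMapX n f f' a b i ≫ twoComplexMapX n f' f'' a' b' i =
      twoComplexMapX n f f'' (a ≫ a') (b ≫ b') i := by
  rcases eq_or_eq_add_one_or_isZero_twoComplex_X n f i with rfl | rfl | hi
  · simp [twoComplexMapX_left]
  · simp [twoComplexMapX_right]
  · exact hi.eq_of_src _ _

lemma twoComplexMapX_zero (f : P ⟶ Q) (f' : P' ⟶ Q') (i : ℤ) :
    twoComplexMapX n f f' 0 0 i = 0 := by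
  simp [twoComplexMapX]

lemma twoComplexMapX_add (f : P ⟶ Q) (f' : P' ⟶ Q') (a a' : P ⟶ P') (b b' : Q ⟶ Q') (i : ℤ) :
    twoComplexMapX n f f' (a + a') (b + b') i =
      twoComplexMapX n f f' a b i + twoComplexMapX n f f' a' b' i := by
  rcases eq_or_eq_add_one_or_isZero_twoComplex_X n f i with rfl | rfl | hi
  · simp [twoComplexMapX_left]
  · simp [twoComplexMapX_right]
  · exact hi.eq_of_src _ _

/-- The morphism of two-term complexes induced by a commutative square. -/
@[simps]
noncomputable def twoComplexMap (f : P ⟶ Q) (f' : P' ⟶ Q') (a : P ⟶ P') (b : Q ⟶ Q')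
    (w : a ≫ f' = f ≫ b) : twoComplex n f ⟶ twoComplex n f' where
  f := twoComplexMapX n f f' a b
  comm' i j hij := by
    obtain rfl : i + 1 = j := hij
    rcases eq_or_eq_add_one_or_isZero_twoComplex_X n f i with rfl | rfl | hi
    · simp [twoComplexMapX_left, twoComplexMapX_right, twoComplex_d_s11, reassoc_of% w]
    · exact (isZero_twoComplex_X_s11 n f' (by lia) (by lia)).eq_of_tgt _ _
    · exact hi.eq_of_src _ _

/-- The isomorphism of two-term complexes induced by an isomorphism of arrows. -/
noncomputable def twoComplexIso (f : P ⟶ Q) (f' : P' ⟶ Q') (a : P ≅ P') (b : Q ≅ Q')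
    (w : a.hom ≫ f' = f ≫ b.hom) : twoComplex n f ≅ twoComplex n f' where
  hom := twoComplexMap n f f' a.hom b.hom w
  inv := twoComplexMap n f' f a.inv b.inv (by rw [Iso.inv_comp_eq, reassoc_of% w]; simp)
  hom_inv_id := by ext i; simp [twoComplexMapX_comp, twoComplexMapX_id]
  inv_hom_id := by ext i; simp [twoComplexMapX_comp, twoComplexMapX_id]

lemma isZero_twoComplex (f : P ⟶ Q) (hP : IsZero P) (hQ : IsZero Q) :
    IsZero (twoComplex n f) := by
  rw [IsZero.iff_id_eq_zero]
  ext i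
  rw [HomologicalComplex.id_f, ← twoComplexMapX_id, hP.eq_of_src (𝟙 P) 0,
    hQ.eq_of_src (𝟙 Q) 0, twoComplexMapX_zero, HomologicalComplex.zero_f]

lemma twoComplex_shift_hom_ext (g : P' ⟶ Q') (f : P ⟶ Q)
    {φ ψ : twoComplex n g ⟶ (twoComplex n f)⟦(1 : ℤ)⟧} (h : φ.f n = ψ.f n) : φ = ψ := by
  ext i
  rcases eq_or_eq_add_one_or_isZero_twoComplex_X n g i with rfl | rfl | hi
  · exact h
  · exact (isZero_twoComplex_X_s11 n f (i := n + 1 + 1) (by lia) (by lia)).eq_of_tgt _ _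
  · exact hi.eq_of_src _ _

end TwoComplex

section Extension

variable {A : Type u} [Category.{v} A] [Preadditive A] [HasZeroObject A] [HasBinaryBiproducts A]
  (n : ℤ) {P Q P' Q' : A} (g : P' ⟶ Q') (h : P' ⟶ Q) (f : P ⟶ Q)

/-- The short complex of two-term complexes with sub `f` and quotient `g` whose middle term is
given by the triangular matrix with diagonal entries `g`, `f` and off-diagonal entry `h`. -/
noncomputable def twoComplexExtension : ShortComplex (CochainComplex A ℤ) where
  X₁ := twoComplex n f
  X₂ := twoComplex n (Biprod.ofComponents g h 0 f)
  X₃ := twoComplex n g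
  f := twoComplexMap n _ _ biprod.inr biprod.inr (by simp)
  g := twoComplexMap n _ _ biprod.fst biprod.fst (by simp)
  zero := by ext i; simp [twoComplexMapX_comp, twoComplexMapX_zero]

/-- The degreewise splitting of `twoComplexExtension` by the biproduct decompositions. -/
noncomputable def twoComplexExtensionSplitting (i : ℤ) :
    ((twoComplexExtension n g h f).map
      (HomologicalComplex.eval A (ComplexShape.up ℤ) i)).Splitting where
  r := twoComplexMapX n (Biprod.ofComponents g h 0 f) f biprod.snd biprod.snd i
  s := twoComplexMapX n g (Biprod.ofComponents g h 0 f) biprod.inl biprod.inl i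
  f_r := (twoComplexMapX_comp n _ _ _ _ _ _ _ i).trans (by
    rw [biprod.inr_snd, biprod.inr_snd, twoComplexMapX_id]; rfl)
  s_g := (twoComplexMapX_comp n _ _ _ _ _ _ _ i).trans (by
    rw [biprod.inl_fst, biprod.inl_fst, twoComplexMapX_id]; rfl)
  id := by
    change twoComplexMapX n _ _ biprod.snd biprod.snd i ≫
          twoComplexMapX n _ _ biprod.inr biprod.inr i +
        twoComplexMapX n _ _ biprod.fst biprod.fst i ≫
          twoComplexMapX n _ _ biprod.inl biprod.inl i =
      𝟙 ((twoComplex n (Biprod.ofComponents g h 0 f)).X i)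
    rw [twoComplexMapX_comp, twoComplexMapX_comp]
    refine (twoComplexMapX_add n _ _ _ _ _ _ i).symm.trans ?_
    rw [add_comm, biprod.total, add_comm, biprod.total, twoComplexMapX_id]

lemma trianglehOfDegreewiseSplit_twoComplexExtension_distinguished :
    CochainComplex.trianglehOfDegreewiseSplit _ (twoComplexExtensionSplitting n g h f) ∈
      distTriang (HomotopyCategory A (ComplexShape.up ℤ)) := by
  rw [HomotopyCategory.distinguished_iff_iso_trianglehOfDegreewiseSplit]
  exact ⟨_, _, ⟨Iso.refl _⟩⟩

lemma homOfDegreewiseSplit_twoComplexExtension_f :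
    HomologicalComplex.Hom.f (CochainComplex.homOfDegreewiseSplit _
      (twoComplexExtensionSplitting n g h f)) n =
      (twoComplexXLeft n g).hom ≫ h ≫ (twoComplexXRight n f).inv := by
  rw [CochainComplex.homOfDegreewiseSplit_f]
  change twoComplexMapX n _ _ biprod.inl biprod.inl n ≫
    (twoComplex n (Biprod.ofComponents g h 0 f)).d n (n + 1) ≫
      twoComplexMapX n _ _ biprod.snd biprod.snd (n + 1) = _
  have inl_snd : biprod.inl ≫ Biprod.ofComponents g h 0 f ≫ biprod.snd = h := by simp
  simp [twoComplexMapX_left, twoComplexMapX_right, twoComplex_d_s11, reassoc_of% inl_snd]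

lemma exists_eq_homOfDegreewiseSplit_twoComplexExtension
    (φ : twoComplex n g ⟶ (twoComplex n f)⟦(1 : ℤ)⟧) :
    ∃ h : P' ⟶ Q,
      φ = CochainComplex.homOfDegreewiseSplit _ (twoComplexExtensionSplitting n g h f) := by
  refine ⟨(twoComplexXLeft n g).inv ≫ φ.f n ≫ (twoComplexXRight n f).hom,
    twoComplex_shift_hom_ext n g f ?_⟩
  rw [homOfDegreewiseSplit_twoComplexExtension_f, Category.assoc, Iso.hom_inv_id_assoc]
  exact (Iso.eq_comp_inv (twoComplexXRight n f)).2 rfl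

lemma exists_iso_twoComplex_ofComponents_of_distTriang
    {T : Triangle (HomotopyCategory A (ComplexShape.up ℤ))} (hT : T ∈ distTriang _)
    (e₁ : T.obj₁ ≅ homotopyQ.obj (twoComplex n f))
    (e₃ : T.obj₃ ≅ homotopyQ.obj (twoComplex n g)) :
    ∃ h : P' ⟶ Q,
      Nonempty (T.obj₂ ≅ homotopyQ.obj (twoComplex n (Biprod.ofComponents g h 0 f))) := by
  obtain ⟨φ, hφ⟩ := homotopyQ.map_surjective
    ((e₃.inv ≫ T.mor₃ ≫ e₁.hom⟦(1 : ℤ)⟧') ≫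
      (homotopyQ.commShiftIso (1 : ℤ)).inv.app (twoComplex n f))
  obtain ⟨h, rfl⟩ := exists_eq_homOfDegreewiseSplit_twoComplexExtension n g f φ
  have comm := (Iso.comp_inv_eq ((homotopyQ.commShiftIso (1 : ℤ)).app _)).1 hφ.symm
  exact ⟨h, ⟨Triangle.π₂.mapIso (isoTriangleOfIso₁₃ T _ hT
    (trianglehOfDegreewiseSplit_twoComplexExtension_distinguished n g h f) e₁ e₃
    ((Iso.inv_comp_eq e₃).1 comm))⟩⟩

end Extension

lemma isZero_biproduct_of_isEmpty {A : Type*} [Category* A] [HasZeroMorphisms A] {ι : Type*}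
    [IsEmpty ι] (P : ι → A) [HasBiproduct P] : IsZero (⨁ P) :=
  (IsZero.iff_id_eq_zero _).2 (biproduct.hom_ext _ _ isEmptyElim)

section Matrix

variable {A : Type u} [Category.{v} A] [Preadditive A] [HasFiniteBiproducts A]
  {ι κ : Type} [Finite ι] [Finite κ]

lemma reindex_hom_comp_matrix (e : ι ≃ κ) {P Q : κ → A} (m : ∀ k l, P k ⟶ Q l) :
    (biproduct.reindex e P).hom ≫ biproduct.matrix m =
      biproduct.matrix (f := P ∘ e) (g := Q ∘ e) (fun k l => m (e k) (e l)) ≫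
        (biproduct.reindex e Q).hom := by
  rw [← Iso.comp_inv_eq]
  ext
  simp [biproduct.reindex]

lemma biproductUniqueIso_hom_comp [Unique ι] {P Q : ι → A} (m : ∀ k l, P k ⟶ Q l) :
    (biproductUniqueIso P).hom ≫ m default default =
      biproduct.matrix m ≫ (biproductUniqueIso Q).hom := by
  rw [← Iso.comp_inv_eq]
  ext i j
  obtain rfl := Subsingleton.elim i default
  obtain rfl := Subsingleton.elim j default
  simp [limitBiconeOfUnique]

lemma biproduct_ι_inl_comp_lift (P : ι ⊕ κ → A) (i : ι) :
    biproduct.ι P (.inl i) ≫ biprod.lift (biproduct.lift fun i => biproduct.π P (.inl i))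
      (biproduct.lift fun j => biproduct.π P (.inr j)) =
    biproduct.ι (fun i => P (.inl i)) i ≫ biprod.inl := by
  classical
  ext <;> simp [biproduct.ι_π]

lemma biproduct_ι_inr_comp_lift (P : ι ⊕ κ → A) (j : κ) :
    biproduct.ι P (.inr j) ≫ biprod.lift (biproduct.lift fun i => biproduct.π P (.inl i))
      (biproduct.lift fun j => biproduct.π P (.inr j)) =
    biproduct.ι (fun j => P (.inr j)) j ≫ biprod.inr := by
  classical
  ext <;> simp [biproduct.ι_π]

/-- The decomposition of a biproduct indexed by a sum type. -/
@[simps]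
noncomputable def biproductSumIso (P : ι ⊕ κ → A) :
    ⨁ P ≅ (⨁ fun i => P (.inl i)) ⊞ (⨁ fun j => P (.inr j)) where
  hom := biprod.lift (biproduct.lift fun i => biproduct.π P (.inl i))
    (biproduct.lift fun j => biproduct.π P (.inr j))
  inv := biprod.desc (biproduct.desc fun i => biproduct.ι P (.inl i))
    (biproduct.desc fun j => biproduct.ι P (.inr j))
  hom_inv_id := by
    apply biproduct.hom_ext'
    rintro (i | j)
    · rw [reassoc_of% (biproduct_ι_inl_comp_lift P i)]; simp
    · rw [reassoc_of% (biproduct_ι_inr_comp_lift P j)]; simp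
  inv_hom_id := by
    classical
    ext i j <;> simp [biproduct.ι_π]

lemma biproductSumIso_hom_comp_ofComponents {P Q : ι ⊕ κ → A} (m : ∀ k l, P k ⟶ Q l)
    (hm : ∀ i j, m (.inr j) (.inl i) = 0) :
    (biproductSumIso P).hom ≫
        Biprod.ofComponents (biproduct.matrix fun i i' => m (.inl i) (.inl i'))
          (biproduct.matrix fun i j => m (.inl i) (.inr j)) 0
          (biproduct.matrix fun j j' => m (.inr j) (.inr j')) =
      biproduct.matrix m ≫ (biproductSumIso Q).hom := by
  rw [← Iso.eq_inv_comp]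
  ext i j <;> simp [hm]

variable [HasZeroObject A] (n : ℤ)

/-- Reindexing of a matrix does not change the two-term complex it defines. -/
noncomputable def twoComplexReindexIso (e : ι ≃ κ) {P Q : κ → A} (m : ∀ k l, P k ⟶ Q l) :
    twoComplex n (biproduct.matrix (f := P ∘ e) (g := Q ∘ e) fun k l => m (e k) (e l)) ≅
      twoComplex n (biproduct.matrix m) :=
  twoComplexIso n _ _ (biproduct.reindex e P) (biproduct.reindex e Q) (reindex_hom_comp_matrix e m)

/-- The two-term complex of a `1 × 1` matrix is that of its entry. -/
noncomputable def twoComplexUniqueIso [Unique ι] {P Q : ι → A} (m : ∀ k l, P k ⟶ Q l) :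
    twoComplex n (biproduct.matrix m) ≅ twoComplex n (m default default) :=
  twoComplexIso n _ _ (biproductUniqueIso P) (biproductUniqueIso Q) (biproductUniqueIso_hom_comp m)

/-- The two-term complex of a block lower triangular matrix, written as that of a `2 × 2` matrix
of its blocks. -/
noncomputable def twoComplexSumIso {P Q : ι ⊕ κ → A} (m : ∀ k l, P k ⟶ Q l)
    (hm : ∀ i j, m (.inr j) (.inl i) = 0) :
    twoComplex n (biproduct.matrix m) ≅
      twoComplex n (Biprod.ofComponents (biproduct.matrix fun i i' => m (.inl i) (.inl i'))
        (biproduct.matrix fun i j => m (.inl i) (.inr j)) 0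
        (biproduct.matrix fun j j' => m (.inr j) (.inr j'))) :=
  twoComplexIso n _ _ (biproductSumIso P) (biproductSumIso Q)
    (biproductSumIso_hom_comp_ofComponents m hm)

end Matrix

instance {ι κ : Type*} [Finite ι] [Finite κ] : Finite (ι ⊕ₗ κ) :=
  inferInstanceAs (Finite (ι ⊕ κ))

section Triangular

variable {A : Type u} [Category.{v} A] [Preadditive A] [HasZeroObject A] [HasFiniteBiproducts A]
  {S : MorphismProperty A} {n : ℤ} {ι κ : Type} [Finite ι] [Finite κ] [Preorder ι] [Preorder κ]
  {X : HomotopyCategory A (ComplexShape.up ℤ)}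

variable (S n ι) in
/-- `X` is isomorphic in the homotopy category to a two-term complex in degrees `n`, `n + 1`
whose differential is a lower triangular matrix indexed by `ι` with diagonal entries in `S`.
The order on the index type decides which entries are above the diagonal, so that block
decompositions can be indexed by lexicographic sums. -/
def IsTriangularTwoTerm (X : HomotopyCategory A (ComplexShape.up ℤ)) : Prop :=
  ∃ (P Q : ι → A) (m : ∀ k l, P k ⟶ Q l), (∀ k, S (m k k)) ∧ (∀ k l, l < k → m k l = 0) ∧
    Nonempty (X ≅ homotopyQ.obj (twoComplex n (biproduct.matrix m)))

namespace IsTriangularTwoTerm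

lemma of_orderIso (hX : IsTriangularTwoTerm S n κ X) (e : ι ≃o κ) :
    IsTriangularTwoTerm S n ι X := by
  obtain ⟨P, Q, m, hS, hm, ⟨e'⟩⟩ := hX
  exact ⟨P ∘ e, Q ∘ e, fun k l => m (e k) (e l), fun k => hS (e k),
    fun k l hkl => hm _ _ (e.lt_iff_lt.2 hkl),
    ⟨e' ≪≫ homotopyQ.mapIso (twoComplexReindexIso n e.toEquiv m).symm⟩⟩

lemma iff_isZero [IsEmpty ι] : IsTriangularTwoTerm S n ι X ↔ IsZero X := by
  have isZero_twoComplex_matrix {P Q : ι → A} (m : ∀ k l, P k ⟶ Q l) :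
      IsZero (homotopyQ.obj (twoComplex n (biproduct.matrix m))) :=
    homotopyQ.map_isZero (isZero_twoComplex n _
      (isZero_biproduct_of_isEmpty P) (isZero_biproduct_of_isEmpty Q))
  constructor
  · rintro ⟨P, Q, m, -, -, ⟨e⟩⟩
    exact (isZero_twoComplex_matrix m).of_iso e
  · intro hX
    exact ⟨isEmptyElim, isEmptyElim, fun k => isEmptyElim k, fun k => isEmptyElim k,
      fun k => isEmptyElim k, ⟨hX.iso (isZero_twoComplex_matrix _)⟩⟩

lemma iff_of_unique [Unique ι] :
    IsTriangularTwoTerm S n ι X ↔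
      ∃ (P Q : A) (s : P ⟶ Q), S s ∧ Nonempty (X ≅ homotopyQ.obj (twoComplex n s)) := by
  constructor
  · rintro ⟨P, Q, m, hS, -, ⟨e⟩⟩
    exact ⟨_, _, m default default, hS default, ⟨e ≪≫ homotopyQ.mapIso (twoComplexUniqueIso n m)⟩⟩
  · rintro ⟨P, Q, s, hs, ⟨e⟩⟩
    exact ⟨fun _ => P, fun _ => Q, fun _ _ => s, fun _ => hs,
      fun k l hkl => (hkl.ne (Subsingleton.elim l k)).elim,
      ⟨e ≪≫ homotopyQ.mapIso (twoComplexUniqueIso n fun _ _ => s).symm⟩⟩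

lemma of_distTriang {T : Triangle (HomotopyCategory A (ComplexShape.up ℤ))}
    (hT : T ∈ distTriang _) (h₁ : IsTriangularTwoTerm S n κ T.obj₁)
    (h₃ : IsTriangularTwoTerm S n ι T.obj₃) : IsTriangularTwoTerm S n (ι ⊕ₗ κ) T.obj₂ := by
  obtain ⟨P, Q, f, hfS, hf, ⟨e₁⟩⟩ := h₁
  obtain ⟨P', Q', g, hgS, hg, ⟨e₃⟩⟩ := h₃
  obtain ⟨h, ⟨e₂⟩⟩ := exists_iso_twoComplex_ofComponents_of_distTriang n _ _ hT e₁ e₃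
  rw [← biproduct.components_matrix h] at e₂
  let m : ∀ k l : ι ⊕ κ, Sum.elim P' P k ⟶ Sum.elim Q' Q l
    | .inl i, .inl i' => g i i'
    | .inl i, .inr j => biproduct.components h i j
    | .inr _, .inl _ => 0
    | .inr j, .inr j' => f j j'
  have hmS : ∀ k, S (m k k) := by
    rintro (i | j)
    · exact hgS i
    · exact hfS j
  have hm : ∀ k l, toLex l < toLex k → m k l = 0 := by
    rintro (i | j) (i' | j') hkl
    · exact hg _ _ (Sum.Lex.inl_lt_inl_iff.1 hkl)
    · exact (Sum.Lex.not_inr_lt_inl hkl).elim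
    · rfl
    · exact hf _ _ (Sum.Lex.inr_lt_inr_iff.1 hkl)
  exact ⟨_, _, fun k l => m (ofLex k) (ofLex l), fun k => hmS (ofLex k), fun _ _ hkl => hm _ _ hkl,
    ⟨e₂ ≪≫ homotopyQ.mapIso
      ((twoComplexReindexIso n ofLex m).trans (twoComplexSumIso n m fun _ _ => rfl)).symm⟩⟩

lemma exists_distTriang (hX : IsTriangularTwoTerm S n (ι ⊕ₗ κ) X) :
    ∃ T ∈ distTriang (HomotopyCategory A (ComplexShape.up ℤ)),
      IsTriangularTwoTerm S n κ T.obj₁ ∧ IsTriangularTwoTerm S n ι T.obj₃ ∧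
        Nonempty (T.obj₂ ≅ X) := by
  obtain ⟨P, Q, m, hS, hm, ⟨e⟩⟩ := hX
  let f (j j' : κ) := m (toLex (.inr j)) (toLex (.inr j'))
  let g (i i' : ι) := m (toLex (.inl i)) (toLex (.inl i'))
  let h (i : ι) (j : κ) := m (toLex (.inl i)) (toLex (.inr j))
  have e₂ := homotopyQ.mapIso ((twoComplexSumIso n (fun k l => m (toLex k) (toLex l))
    fun i j => hm _ _ (Sum.Lex.inl_lt_inr i j)).symm.trans (twoComplexReindexIso n toLex m))
  exact ⟨_, trianglehOfDegreewiseSplit_twoComplexExtension_distinguished n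
      (biproduct.matrix g) (biproduct.matrix h) (biproduct.matrix f),
    ⟨_, _, f, fun _ => hS _, fun _ _ hlt => hm _ _ (Sum.Lex.inr_lt_inr_iff.2 hlt), ⟨Iso.refl _⟩⟩,
    ⟨_, _, g, fun _ => hS _, fun _ _ hlt => hm _ _ (Sum.Lex.inl_lt_inl_iff.2 hlt), ⟨Iso.refl _⟩⟩,
    ⟨e₂ ≪≫ e.symm⟩⟩

end IsTriangularTwoTerm

end Triangular

/-- Concatenation of two finite chains, as an order isomorphism. -/
noncomputable def finAddOrderIso (a b : ℕ) : Fin (a + b) ≃o Fin a ⊕ₗ Fin b :=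
  Fintype.orderIsoFinOfCardEq (Fin a ⊕ₗ Fin b) (by simp)

lemma extClosure.of_iso {C : Type u} [Category.{v} C] [HasZeroObject C] [HasShift C ℤ]
    [Preadditive C] [∀ n : ℤ, (shiftFunctor C n).Additive] [Pretriangulated C] {E : Set C}
    {X Y : C} (hX : extClosure E X) (e : X ≅ Y) : extClosure E Y := by
  have distinguished : Triangle.mk e.hom (0 : Y ⟶ 0) 0 ∈ distTriang C :=
    (Triangle.distinguished_iff_of_isZero₃ _ (isZero_zero C)).2 e.isIso_hom
  exact .ext₂ _ distinguished hX (.zero _ (isZero_zero C))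

section Closure

variable {A : Type u} [Category.{v} A] [Preadditive A] [HasZeroObject A] [HasFiniteBiproducts A]
  {S : MorphismProperty A} {X : HomotopyCategory A (ComplexShape.up ℤ)}

lemma extClosure.exists_isTriangularTwoTerm (hX : extClosure (coneSet S) X) :
    ∃ N : ℕ, IsTriangularTwoTerm S (-1) (Fin N) X := by
  induction hX with
  | of X hX =>
    obtain ⟨P, Q, s, hs, rfl⟩ := hX
    exact ⟨1, IsTriangularTwoTerm.iff_of_unique.2 ⟨P, Q, s, hs, ⟨Iso.refl _⟩⟩⟩
  | zero X hX => exact ⟨0, IsTriangularTwoTerm.iff_isZero.2 hX⟩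
  | ext₂ T hT _ _ ih₁ ih₃ =>
    obtain ⟨b, h₁⟩ := ih₁
    obtain ⟨a, h₃⟩ := ih₃
    exact ⟨a + b, (IsTriangularTwoTerm.of_distTriang hT h₁ h₃).of_orderIso (finAddOrderIso a b)⟩

lemma IsTriangularTwoTerm.extClosure_coneSet {N : ℕ} (hX : IsTriangularTwoTerm S (-1) (Fin N) X) :
    extClosure (coneSet S) X := by
  induction N generalizing X with
  | zero => exact .zero X (iff_isZero.1 hX)
  | succ N ih =>
    obtain ⟨T, hT, h₁, h₃, ⟨e⟩⟩ := (hX.of_orderIso (finAddOrderIso N 1).symm).exists_distTriang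
    obtain ⟨P, Q, s, hs, ⟨e₁⟩⟩ := iff_of_unique.1 h₁
    have h₁' : extClosure (coneSet S) T.obj₁ :=
      extClosure.of_iso (.of _ ⟨P, Q, s, hs, rfl⟩) e₁.symm
    exact extClosure.of_iso (.ext₂ T hT h₁' (ih h₃)) e

end Closure

/-- Proposition: the extension-closure `D` of the set of cones of elements of `S`
consists exactly of the complexes isomorphic to cones of lower triangular matrix
morphisms with diagonal entries in `S`. -/
theorem statement11 {A : Type u} [Category.{v} A] [Preadditive A] [HasZeroObject A]
    [HasFiniteBiproducts A] (S : MorphismProperty A)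
    (X : HomotopyCategory A (ComplexShape.up ℤ)) :
    extClosure (coneSet S) X ↔
      ∃ (n : ℕ) (P Q : Fin n → A) (m : ∀ k l : Fin n, P k ⟶ Q l),
        (∀ k : Fin n, S (m k k)) ∧ (∀ k l : Fin n, l < k → m k l = 0) ∧
        Nonempty (X ≅ homotopyQ.obj (twoComplex (-1) (biproduct.matrix m))) := by
  constructor
  · intro hX
    exact hX.exists_isTriangularTwoTerm
  · rintro ⟨n, hX⟩
    exact IsTriangularTwoTerm.extClosure_coneSet (N := n) hX
end
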